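/- arXiv:quant-ph/0406162 — 3 statements merged into one kernel-verified Lean document; each statement's English description precedes it below -/
import Mathlib

section
/- Let ρ^{ABC} be a state of a tripartite quantum system on finite-dimensional Hilbert spaces that saturates strong subadditivity at pivot B, i.e. S(AB) + S(BC) = S(ABC) + S(B). Then there exists an orthogonal decomposition of B's Hilbert space H_B = ⊕_j H_{b_j^L} ⊗ H_{b_j^R} into mutually orthogonal subspaces, each presented as a tensor product of two Hilbert spaces, together with a probability distribution (p_j), states ρ_j^{A b_j^L} on H_A ⊗ H_{b_j^L} and states ρ_j^{b_j^R C} on H_{b_j^R} ⊗ H_C, such that ρ^{ABC} = ⊕_j p_j · ρ_j^{A b_j^L} ⊗ ρ_j^{b_j^R C}. -/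
/-!
Write `-D(ρ ‖ σ) = Tr ρ log σ - Tr ρ log ρ`. Saturation of strong subadditivity says that the
relative entropy `D(ρ_ABC ‖ ρ_AB ⊗ 1_C)` does not decrease when `A` is traced out, i.e. it equals
`D(ρ_BC ‖ ρ_B ⊗ 1_C)`. No quantitative inequality is needed, only the consequences of equality.

*Equality in data processing.* With the relative modular operator `Δ = L_σ R_ρ⁻¹`, the relative
entropy is an integral over `t > 0` of the resolvent forms `⟨ρ^{1/2}, (Δ + t)⁻¹ ρ^{1/2}⟩`. Each
form is the maximum of a quadratic functional (`quad_le`), and every competitor for the reduced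
pair gives one for the full pair, so the forms are comparable for each `t`. Equality of the
integrals forces equality for every `t` (`log_rigidity`), hence equality of the maximizers, hence
of all functions of the two modular operators (`resolvent_indep`, `dpi_equality`). Applied to the
square root this yields the Petz recovery formula (`petz_recovery`, `markov_identity`)
`ρ = ρ_AB^{1/2} ρ_B^{-1/2} ρ_BC ρ_B^{-1/2} ρ_AB^{1/2}`.

*Commuting algebras on `B`.* Let `a_{αβ}` be the `B`-blocks of `ρ_AB^{1/2}` and `b = ρ_B^{1/2}`.
Tracing out `A` in the recovery formula shows that the `B`-blocks of `b⁻¹ ρ_BC b⁻¹` are fixed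
points of the unital completely positive map `y ↦ b⁻¹ (∑ a_{αβ} y a_{αβ}ᴴ) b⁻¹`. It has the
faithful invariant state `Tr b² ·`, so its fixed points form the commutant `N` of the Kraus
operators (`fixed_commutes`), and conjugation by `b` preserves `N`. Consequently `b = h k` with
`h ∈ N` and `k` in the commutant of `N` (`exists_factor`), and the `B`-blocks of `ρ` itself are
products `X_{αα'} Y_{cc'}` with `Y_{cc'} ∈ N` and `X_{αα'}` in the commutant of `N`
(`exists_factorization`, `exists_commuting_product`).

*Block form.* A star-closed matrix algebra and its commutant are simultaneously of the form
`⊕ⱼ 1 ⊗ M_{r j}` and `⊕ⱼ M_{l j} ⊗ 1` in a suitable orthonormal basis (`star_structure`). In this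
basis `ρ` is `⊕ⱼ Λⱼ ⊗ Γⱼ`; each block is a compression of `ρ`, hence positive, and can be rescaled
to `pⱼ` times a product of two states (`normalize_product`).
-/

open scoped BigOperators ComplexOrder

/-- Von Neumann entropy (base 2) of a matrix: for a Hermitian matrix, the Shannon
entropy of its eigenvalues; junk value `0` for non-Hermitian matrices. -/
noncomputable def vNEntropy {n : Type*} [Fintype n] [DecidableEq n] (M : Matrix n n ℂ) : ℝ :=
  if h : M.IsHermitian then -∑ i, (h.eigenvalues i) * Real.logb 2 (h.eigenvalues i) else 0

/-- A density matrix: positive semidefinite with trace one. -/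
def IsState {n : Type*} [Fintype n] [DecidableEq n] (M : Matrix n n ℂ) : Prop :=
  M.PosSemidef ∧ M.trace = 1

section Tri

variable {A B C : Type*} [Fintype A] [DecidableEq A] [Fintype B] [DecidableEq B]
  [Fintype C] [DecidableEq C]
  (ρ : Matrix (A × B × C) (A × B × C) ℂ)

/-- The reduced state on `A ⊗ C` of a tripartite state. -/
noncomputable def redAC : Matrix (A × C) (A × C) ℂ :=
  Matrix.of fun p q : A × C => ∑ b, ρ (p.1, b, p.2) (q.1, b, q.2)

/-- Entropies of the marginals of a tripartite state. -/
noncomputable def S3A : ℝ :=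
  vNEntropy (Matrix.of fun a a' : A => ∑ b, ∑ c, ρ (a, b, c) (a', b, c))
noncomputable def S3B : ℝ :=
  vNEntropy (Matrix.of fun b b' : B => ∑ a, ∑ c, ρ (a, b, c) (a, b', c))
noncomputable def S3C : ℝ :=
  vNEntropy (Matrix.of fun c c' : C => ∑ a, ∑ b, ρ (a, b, c) (a, b, c'))
noncomputable def S3AB : ℝ :=
  vNEntropy (Matrix.of fun p q : A × B => ∑ c, ρ (p.1, p.2, c) (q.1, q.2, c))
noncomputable def S3AC : ℝ := vNEntropy (redAC ρ)
noncomputable def S3BC : ℝ :=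
  vNEntropy (Matrix.of fun p q : B × C => ∑ a, ρ (a, p.1, p.2) (a, q.1, q.2))
noncomputable def S3ABC : ℝ := vNEntropy ρ

end Tri

open Matrix Filter Topology

set_option linter.unusedSectionVars false

/-! ### Resolvents and the logarithm -/

/-- A finite combination of nonnegative points annihilating all resolvents `x ↦ (x + t)⁻¹`,
`t > 0`, annihilates every function: the expansion at `t → ∞` kills all moments, and any
function agrees with a polynomial on finitely many points. -/
theorem resolvent_indep {ι : Type*} [Fintype ι] (m : ι → ℂ) (x : ι → ℝ) (hx : ∀ i, 0 ≤ x i)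
    (h : ∀ t : ℝ, 0 < t → ∑ i, m i * (((x i + t)⁻¹ : ℝ) : ℂ) = 0) (f : ℝ → ℝ) :
    ∑ i, m i * ((f (x i) : ℝ) : ℂ) = 0 := by
  have lim : ∀ a : ℝ, Tendsto (fun t : ℝ => t * (a + t)⁻¹) atTop (𝓝 1) := by
    intro a
    have h1 : Tendsto (fun t : ℝ => 1 - a * (a + t)⁻¹) atTop (𝓝 (1 - a * 0)) :=
      (tendsto_inv_atTop_zero.comp (tendsto_atTop_add_const_left _ a tendsto_id)).const_mul a
        |>.const_sub 1
    simp only [mul_zero, sub_zero] at h1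
    refine h1.congr' ?_
    filter_upwards [eventually_gt_atTop (-a)] with t ht
    have : a + t ≠ 0 := by linarith
    field_simp
    ring
  have step : ∀ n : ℕ, ∀ t : ℝ, 0 < t →
      ∑ i, m i * (x i : ℂ) ^ n * (((x i + t)⁻¹ : ℝ) : ℂ) = 0 := by
    intro n
    induction n with
    | zero => simpa using h
    | succ n ih =>
      have key : ∑ i, m i * (x i : ℂ) ^ n = 0 := by
        have hl : Tendsto (fun t : ℝ => ∑ i, m i * (x i : ℂ) ^ n * ((t * (x i + t)⁻¹ : ℝ) : ℂ))
            atTop (𝓝 (∑ i, m i * (x i : ℂ) ^ n * ((1 : ℝ) : ℂ))) :=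
          tendsto_finsetSum _ fun i _ =>
            ((Complex.continuous_ofReal.tendsto 1).comp (lim (x i))).const_mul _
        have hz : (fun t : ℝ => ∑ i, m i * (x i : ℂ) ^ n * ((t * (x i + t)⁻¹ : ℝ) : ℂ))
            =ᶠ[atTop] fun _ => 0 := by
          filter_upwards [eventually_gt_atTop 0] with t ht
          rw [← mul_zero (t : ℂ), ← ih t ht, Finset.mul_sum]
          refine Finset.sum_congr rfl fun i _ => ?_
          push_cast
          ring
        have := tendsto_nhds_unique (hl.congr' hz) tendsto_const_nhds
        simpa using this
      intro t ht
      have e : ∀ i, m i * (x i : ℂ) ^ (n + 1) * (((x i + t)⁻¹ : ℝ) : ℂ)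
          = m i * (x i : ℂ) ^ n - t * (m i * (x i : ℂ) ^ n * (((x i + t)⁻¹ : ℝ) : ℂ)) := by
        intro i
        have h0 : ((x i : ℂ) + t) ≠ 0 := by
          have := hx i
          exact_mod_cast (by linarith : x i + t ≠ 0)
        push_cast
        field_simp
        ring
      simp only [e, Finset.sum_sub_distrib, ← Finset.mul_sum, ih t ht, key]
      simp
  have mom : ∀ n : ℕ, ∑ i, m i * (x i : ℂ) ^ n = 0 := by
    intro n
    have h1 := step n 1 one_pos
    have h2 := step (n + 1) 1 one_pos
    rw [← add_zero (0 : ℂ)]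
    nth_rw 1 [← h1]
    rw [← h2, ← Finset.sum_add_distrib]
    refine Finset.sum_congr rfl fun i _ => ?_
    have h0 : ((x i : ℂ) + 1) ≠ 0 := by
      have := hx i
      exact_mod_cast (by linarith : x i + 1 ≠ 0)
    push_cast
    field_simp
    ring
  classical
  set s : Finset ℝ := Finset.univ.image x
  set p : Polynomial ℝ := Lagrange.interpolate s id f
  have hp : ∀ i, p.eval (x i) = f (x i) := fun i =>
    Lagrange.eval_interpolate_at_node (s := s) (v := id) f (fun a _ b _ h => h)
      (Finset.mem_image_of_mem x (Finset.mem_univ i))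
  simp only [← hp, Polynomial.eval_eq_sum_range]
  push_cast
  simp only [Finset.mul_sum]
  rw [Finset.sum_comm]
  refine Finset.sum_eq_zero fun n _ => ?_
  rw [← mul_zero ((p.coeff n : ℝ) : ℂ), ← mom n, Finset.mul_sum]
  refine Finset.sum_congr rfl fun i _ => ?_
  ring

/-- Rigidity of the integral representation of `log`. The function `G t = ∑ wᵢ log (xᵢ + t)` has
derivative `∑ wᵢ (xᵢ + t)⁻¹ ≥ 0`, vanishes at `t = 0` by `hlog`, and tends to `0` at infinity
by `hsum`; being monotone, it is identically zero. -/
theorem log_rigidity {ι : Type*} [Fintype ι] (w x : ι → ℝ) (hx : ∀ i, 0 ≤ x i)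
    (hw : ∀ i, x i = 0 → w i = 0) (hsum : ∑ i, w i = 0) (hlog : ∑ i, w i * Real.log (x i) = 0)
    (hF : ∀ t : ℝ, 0 < t → 0 ≤ ∑ i, w i * (x i + t)⁻¹) :
    ∀ t : ℝ, 0 < t → ∑ i, w i * (x i + t)⁻¹ = 0 := by
  set G : ℝ → ℝ := fun t => ∑ i, w i * Real.log (x i + t) with hG
  have hd : ∀ t : ℝ, 0 < t → HasDerivAt G (∑ i, w i * (x i + t)⁻¹) t := by
    intro t ht
    refine HasDerivAt.fun_sum fun i _ => ?_
    have h0 : x i + t ≠ 0 := by have := hx i; linarith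
    have := (((hasDerivAt_id t).const_add (x i)).log h0).const_mul (w i)
    simpa using this
  have hc : ContinuousOn G (Set.Ici 0) := by
    refine continuousOn_finsetSum _ fun i _ => ?_
    rcases (hx i).eq_or_lt with h | h
    · simp [hw i h.symm, continuousOn_const]
    · refine continuousOn_const.mul (ContinuousOn.log (by fun_prop) ?_)
      intro t ht
      have : 0 ≤ t := ht
      linarith
  have hmono : MonotoneOn G (Set.Ici 0) := by
    refine monotoneOn_of_deriv_nonneg (convex_Ici 0) hc ?_ ?_
    · intro t ht
      rw [interior_Ici] at ht
      exact (hd t ht).differentiableAt.differentiableWithinAt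
    · intro t ht
      rw [interior_Ici] at ht
      rw [(hd t ht).deriv]
      exact hF t ht
  have hlim : Tendsto G atTop (𝓝 0) := by
    have h1 : Tendsto (fun t : ℝ => ∑ i, w i * (Real.log (1 + x i * t⁻¹))) atTop
        (𝓝 (∑ i, w i * Real.log (1 + x i * 0))) := by
      refine tendsto_finsetSum _ fun i _ => Tendsto.const_mul _ ?_
      exact ((tendsto_inv_atTop_zero.const_mul (x i)).const_add 1).log (by simp)
    simp only [mul_zero, add_zero, Real.log_one, Finset.sum_const_zero] at h1
    refine h1.congr' ?_
    filter_upwards [eventually_gt_atTop 0] with t ht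
    have : G t = ∑ i, w i * Real.log (x i + t) - Real.log t * ∑ i, w i := by
      rw [hsum, mul_zero, sub_zero]
    rw [this, Finset.mul_sum, ← Finset.sum_sub_distrib]
    refine Finset.sum_congr rfl fun i _ => ?_
    have h0 : 0 < x i + t := by have := hx i; linarith
    have : 1 + x i * t⁻¹ = (x i + t) / t := by field_simp; ring
    rw [this, Real.log_div h0.ne' ht.ne']
    ring
  have hG0 : G 0 = 0 := by simpa [hG] using hlog
  have hzero : ∀ t : ℝ, 0 < t → G t = 0 := by
    intro t ht
    apply le_antisymm
    · refine ge_of_tendsto hlim ?_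
      filter_upwards [eventually_ge_atTop t] with u hu
      exact hmono ht.le (ht.le.trans hu) hu
    · rw [← hG0]
      exact hmono Set.self_mem_Ici ht.le ht.le
  intro t ht
  have h1 : G =ᶠ[𝓝 t] fun _ => 0 := by
    filter_upwards [lt_mem_nhds ht] with u hu using hzero u hu
  exact ((hd t ht).congr_of_eventuallyEq h1.symm).unique (hasDerivAt_const t (0 : ℝ))

/-! ### Spectral calculus in coordinates -/

/-- The matrix `U diag(f) Uᴴ`: the function with values `f` in the eigenbasis `U`. -/
noncomputable def spec {n : Type*} [Fintype n] [DecidableEq n] (U : Matrix n n ℂ) (f : n → ℝ) :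
    Matrix n n ℂ :=
  U * diagonal (fun i => (f i : ℂ)) * Uᴴ

section Spec
variable {n : Type*} [Fintype n] [DecidableEq n]

theorem spec_mul {U : Matrix n n ℂ} (hU : Uᴴ * U = 1) (f g : n → ℝ) :
    spec U f * spec U g = spec U (fun i => f i * g i) := by
  have : spec U f * spec U g = U * diagonal (fun i => (f i : ℂ)) * (Uᴴ * U) *
      diagonal (fun i => (g i : ℂ)) * Uᴴ := by
    simp only [spec, Matrix.mul_assoc]
  rw [this, hU, Matrix.mul_one, Matrix.mul_assoc U, diagonal_mul_diagonal]
  simp [spec]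

theorem spec_conjTranspose (U : Matrix n n ℂ) (f : n → ℝ) : (spec U f)ᴴ = spec U f := by
  simp only [spec, conjTranspose_mul, conjTranspose_conjTranspose, diagonal_conjTranspose,
    Matrix.mul_assoc]
  congr 3
  ext i
  simp

theorem spec_one {U : Matrix n n ℂ} (hU : U * Uᴴ = 1) : spec U (fun _ => 1) = 1 := by
  simp [spec, hU]

theorem spec_sub (U : Matrix n n ℂ) (f g : n → ℝ) :
    spec U f - spec U g = spec U (fun i => f i - g i) := by
  simp only [spec, ← Matrix.sub_mul, ← Matrix.mul_sub, diagonal_sub]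
  simp

theorem spec_trace {U : Matrix n n ℂ} (hU : Uᴴ * U = 1) (f : n → ℝ) :
    (spec U f).trace = ∑ i, (f i : ℂ) := by
  rw [spec, trace_mul_comm, ← Matrix.mul_assoc, hU, Matrix.one_mul, trace_diagonal]

/-- A matrix commuting with `U diag(f) Uᴴ` commutes with every function of it. -/
theorem spec_commute {U : Matrix n n ℂ} (hU : Uᴴ * U = 1) (hU' : U * Uᴴ = 1) (f : n → ℝ)
    (φ : ℝ → ℝ) {y : Matrix n n ℂ} (h : y * spec U f = spec U f * y) :
    y * spec U (fun i => φ (f i)) = spec U (fun i => φ (f i)) * y := by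
  set z := Uᴴ * y * U with hz
  have hy : y = U * z * Uᴴ := by
    calc y = (U * Uᴴ) * y * (U * Uᴴ) := by simp [hU']
      _ = _ := by simp only [hz, Matrix.mul_assoc]
  have e1 : ∀ g : n → ℝ, y * spec U g = U * (z * diagonal (fun i => (g i : ℂ))) * Uᴴ := by
    intro g
    have : y * spec U g = U * z * (Uᴴ * U) * diagonal (fun i => (g i : ℂ)) * Uᴴ := by
      rw [hy]; simp only [spec, Matrix.mul_assoc]
    rw [this, hU]; simp only [Matrix.mul_one, Matrix.mul_assoc]
  have e2 : ∀ g : n → ℝ, spec U g * y = U * (diagonal (fun i => (g i : ℂ)) * z) * Uᴴ := by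
    intro g
    have : spec U g * y = U * diagonal (fun i => (g i : ℂ)) * (Uᴴ * U) * z * Uᴴ := by
      rw [hy]; simp only [spec, Matrix.mul_assoc]
    rw [this, hU]; simp only [Matrix.mul_one, Matrix.mul_assoc]
  have e3 : z * diagonal (fun i => (f i : ℂ)) = diagonal (fun i => (f i : ℂ)) * z := by
    have : Uᴴ * (y * spec U f) * U = Uᴴ * (spec U f * y) * U := by rw [h]
    rw [e1, e2] at this
    have c : ∀ w : Matrix n n ℂ, Uᴴ * (U * w * Uᴴ) * U = w := by
      intro w
      calc Uᴴ * (U * w * Uᴴ) * U = (Uᴴ * U) * w * (Uᴴ * U) := by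
            simp only [Matrix.mul_assoc]
        _ = w := by simp [hU]
    rwa [c, c] at this
  rw [e1, e2]
  congr 2
  ext i j
  have := congrFun (congrFun e3 i) j
  rw [mul_diagonal, diagonal_mul] at this ⊢
  by_cases hij : f i = f j
  · rw [hij]; ring
  · have h0 : z i j = 0 := by
      have : ((f j : ℂ) - f i) * z i j = 0 := by linear_combination this
      rcases mul_eq_zero.mp this with h1 | h1
      · exact absurd (by exact_mod_cast (sub_eq_zero.mp h1).symm) hij
      · exact h1
    simp [h0]

end Spec

/-! ### Relative modular operators and equality in data processing -/

section Pair
variable {n : Type*} [Fintype n] [DecidableEq n]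

/-- The concave quadratic functional `2 Re Tr(Xᴴρ) - Re Tr(XXᴴσ) - t Re Tr(XᴴXρ)`, whose maximum
over `X` is the resolvent form `⟨ρ^{1/2}, (Δ + t)⁻¹ ρ^{1/2}⟩` of the relative modular operator
`Δ = L_σ R_ρ⁻¹`. -/
noncomputable def quad (ρ σ : Matrix n n ℂ) (t : ℝ) (X : Matrix n n ℂ) : ℝ :=
  2 * (Xᴴ * ρ).trace.re - (X * Xᴴ * σ).trace.re - t * (Xᴴ * X * ρ).trace.re

/-- For `σ = W diag(s) Wᴴ` and `ρ = U diag(r) Uᴴ`, the value `φ(Δ)` of the relative modular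
operator `Δ = L_σ R_ρ⁻¹` at the support projection of `ρ`. -/
noncomputable def modf (W : Matrix n n ℂ) (s : n → ℝ) (U : Matrix n n ℂ) (r : n → ℝ)
    (φ : ℝ → ℝ) : Matrix n n ℂ :=
  W * Matrix.of (fun k i => if r i = 0 then 0 else ((φ (s k / r i) : ℝ) : ℂ) * (Wᴴ * U) k i) * Uᴴ

/-- The quadratic form of the resolvent `(Δ + t)⁻¹` at `ρ^{1/2}`. Terms with `r i = 0` vanish, so
the junk quotient `s k / 0` plays no role. -/
noncomputable def resF (W : Matrix n n ℂ) (s : n → ℝ) (U : Matrix n n ℂ) (r : n → ℝ) (t : ℝ) : ℝ :=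
  ∑ k, ∑ i, Complex.normSq ((Wᴴ * U) k i) * r i * (s k / r i + t)⁻¹

theorem quad_coord {W U : Matrix n n ℂ} (hW : Wᴴ * W = 1) (hU : Uᴴ * U = 1)
    (s r : n → ℝ) (t : ℝ) (x : Matrix n n ℂ) :
    quad (spec U r) (spec W s) t (W * x * Uᴴ) =
      ∑ k, ∑ i, (2 * (star (x k i) * (Wᴴ * U) k i).re * r i
        - Complex.normSq (x k i) * (s k + t * r i)) := by
  have t1 : ((W * x * Uᴴ)ᴴ * spec U r).trace =
      ∑ k, ∑ i, star (x k i) * (Wᴴ * U) k i * r i := by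
    have : ((W * x * Uᴴ)ᴴ * spec U r).trace =
        (xᴴ * ((Wᴴ * U) * diagonal (fun i => (r i : ℂ)))).trace := by
      have e : (W * x * Uᴴ)ᴴ * spec U r = U * (xᴴ * ((Wᴴ * U) * diagonal (fun i => (r i : ℂ))) * Uᴴ)
          := by
        simp only [spec, conjTranspose_mul, conjTranspose_conjTranspose, Matrix.mul_assoc]
      rw [e, trace_mul_comm, Matrix.mul_assoc, hU, Matrix.mul_one]
    rw [this, trace, Finset.sum_comm]
    refine Finset.sum_congr rfl fun i _ => ?_
    rw [diag_apply, mul_apply]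
    refine Finset.sum_congr rfl fun k _ => ?_
    rw [mul_diagonal, conjTranspose_apply, mul_assoc]
  have t2 : ((W * x * Uᴴ) * (W * x * Uᴴ)ᴴ * spec W s).trace =
      ∑ k, ∑ i, x k i * star (x k i) * s k := by
    have : ((W * x * Uᴴ) * (W * x * Uᴴ)ᴴ * spec W s).trace =
        (x * xᴴ * diagonal (fun i => (s i : ℂ))).trace := by
      have e : (W * x * Uᴴ) * (W * x * Uᴴ)ᴴ * spec W s
          = W * (x * (Uᴴ * U) * xᴴ * (Wᴴ * W) * diagonal (fun i => (s i : ℂ)) * Wᴴ) := by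
        simp only [spec, conjTranspose_mul, conjTranspose_conjTranspose, Matrix.mul_assoc]
      rw [e, trace_mul_comm, Matrix.mul_assoc, hW, hU]
      simp only [Matrix.mul_one]
    rw [this, trace]
    refine Finset.sum_congr rfl fun k _ => ?_
    rw [diag_apply, mul_diagonal, mul_apply, Finset.sum_mul]
    rfl
  have t3 : ((W * x * Uᴴ)ᴴ * (W * x * Uᴴ) * spec U r).trace =
      ∑ k, ∑ i, star (x k i) * x k i * r i := by
    have : ((W * x * Uᴴ)ᴴ * (W * x * Uᴴ) * spec U r).trace =
        (xᴴ * x * diagonal (fun i => (r i : ℂ))).trace := by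
      have e : (W * x * Uᴴ)ᴴ * (W * x * Uᴴ) * spec U r
          = U * (xᴴ * (Wᴴ * W) * x * (Uᴴ * U) * diagonal (fun i => (r i : ℂ)) * Uᴴ) := by
        simp only [spec, conjTranspose_mul, conjTranspose_conjTranspose, Matrix.mul_assoc]
      rw [e, trace_mul_comm, Matrix.mul_assoc, hU, hW]
      simp only [Matrix.mul_one]
    rw [this, trace, Finset.sum_comm]
    refine Finset.sum_congr rfl fun i _ => ?_
    rw [diag_apply, mul_diagonal, mul_apply, Finset.sum_mul]
    rfl
  rw [quad, t1, t2, t3]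
  simp only [Complex.re_sum, Finset.mul_sum, ← Finset.sum_sub_distrib]
  refine Finset.sum_congr rfl fun k _ => Finset.sum_congr rfl fun i _ => ?_
  simp only [Complex.mul_re, Complex.star_def, Complex.conj_re, Complex.conj_im,
    Complex.ofReal_re, Complex.ofReal_im, Complex.mul_im, Complex.normSq_apply]
  ring

/-- Completing the square in one matrix entry. -/
theorem entry_square (x g : ℂ) {r s t : ℝ} (hr : 0 < r) (hs : 0 ≤ s) (ht : 0 < t) :
    2 * (star x * g).re * r - Complex.normSq x * (s + t * r) =
      Complex.normSq g * r * (s / r + t)⁻¹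
        - r * (s / r + t) * Complex.normSq (x - (((s / r + t)⁻¹ : ℝ) : ℂ) * g) := by
  obtain ⟨l, hl⟩ : ∃ l, l = s / r + t := ⟨_, rfl⟩
  have hl0 : 0 < l := by rw [hl]; positivity
  have hs' : s + t * r = r * l := by rw [hl]; field_simp
  rw [← hl, hs']
  simp only [Complex.normSq_apply, Complex.sub_re, Complex.sub_im, Complex.mul_re,
    Complex.mul_im, Complex.ofReal_re, Complex.ofReal_im, Complex.star_def, Complex.conj_re,
    Complex.conj_im]
  field_simp
  ring

theorem quad_modf {W U : Matrix n n ℂ} (hW : Wᴴ * W = 1) (hU : Uᴴ * U = 1)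
    {s r : n → ℝ} (hs : ∀ i, 0 ≤ s i) (hr : ∀ i, 0 ≤ r i) {t : ℝ} (ht : 0 < t) :
    quad (spec U r) (spec W s) t (modf W s U r fun l => (l + t)⁻¹) = resF W s U r t := by
  rw [modf, quad_coord hW hU, resF]
  refine Finset.sum_congr rfl fun k _ => Finset.sum_congr rfl fun i _ => ?_
  by_cases h : r i = 0
  · simp [h]
  · rw [entry_square _ _ (lt_of_le_of_ne (hr i) (Ne.symm h)) (hs k) ht]
    simp [h]

/-- The functional `quad` is bounded by the resolvent form, and a maximizer agrees with the
resolvent on the support of `ρ`. -/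
theorem quad_le {W U : Matrix n n ℂ} (hW : Wᴴ * W = 1) (hW' : W * Wᴴ = 1) (hU : Uᴴ * U = 1)
    (hU' : U * Uᴴ = 1)
    {s r : n → ℝ} (hs : ∀ i, 0 ≤ s i) (hr : ∀ i, 0 ≤ r i) {t : ℝ} (ht : 0 < t)
    (X : Matrix n n ℂ) :
    quad (spec U r) (spec W s) t X ≤ resF W s U r t ∧
    (quad (spec U r) (spec W s) t X = resF W s U r t →
      X * spec U (fun i => if r i = 0 then 0 else 1) = modf W s U r fun l => (l + t)⁻¹) := by
  set x := Wᴴ * X * U with hx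
  have hX : X = W * x * Uᴴ := by
    calc X = (W * Wᴴ) * X * (U * Uᴴ) := by simp [hU', hW']
      _ = _ := by simp only [hx, Matrix.mul_assoc]
  have le : ∀ k i, 2 * (star (x k i) * (Wᴴ * U) k i).re * r i
        - Complex.normSq (x k i) * (s k + t * r i)
        ≤ Complex.normSq ((Wᴴ * U) k i) * r i * (s k / r i + t)⁻¹ := by
    intro k i
    by_cases h : r i = 0
    · have := mul_nonneg (Complex.normSq_nonneg (x k i)) (hs k)
      simp only [h]
      simpa using this
    · have h' := lt_of_le_of_ne (hr i) (Ne.symm h)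
      rw [entry_square _ _ h' (hs k) ht, sub_le_self_iff]
      have := hs k
      exact mul_nonneg (by positivity) (Complex.normSq_nonneg _)
  constructor
  · rw [hX, quad_coord hW hU, resF]
    exact Finset.sum_le_sum fun k _ => Finset.sum_le_sum fun i _ => le k i
  · intro heq
    rw [hX, quad_coord hW hU, resF] at heq
    have h1 := (Finset.sum_eq_sum_iff_of_le
      (fun k _ => Finset.sum_le_sum fun i _ => le k i)).mp heq
    have h2 : ∀ k i, 2 * (star (x k i) * (Wᴴ * U) k i).re * r i
        - Complex.normSq (x k i) * (s k + t * r i)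
        = Complex.normSq ((Wᴴ * U) k i) * r i * (s k / r i + t)⁻¹ := fun k i =>
      (Finset.sum_eq_sum_iff_of_le (fun i _ => le k i)).mp (h1 k (Finset.mem_univ k)) i
        (Finset.mem_univ i)
    have e : X * spec U (fun i => if r i = 0 then 0 else 1) =
        W * (x * diagonal (fun i => (((if r i = 0 then 0 else 1 : ℝ)) : ℂ))) * Uᴴ := by
      have : X * spec U (fun i => if r i = 0 then 0 else 1) = W * (x * (Uᴴ * U) *
          diagonal (fun i => (((if r i = 0 then 0 else 1 : ℝ)) : ℂ))) * Uᴴ := by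
        rw [hX]; simp only [spec, Matrix.mul_assoc]
      rw [this, hU, Matrix.mul_one]
    rw [e, modf]
    congr 2
    ext k i
    rw [mul_diagonal, of_apply]
    by_cases h : r i = 0
    · simp [h]
    · have h' := lt_of_le_of_ne (hr i) (Ne.symm h)
      have h3 := h2 k i
      rw [entry_square _ _ h' (hs k) ht, sub_eq_self] at h3
      have hpos : 0 < r i * (s k / r i + t) := by have := hs k; positivity
      have h4 := Complex.normSq_eq_zero.mp ((mul_eq_zero.mp h3).resolve_left hpos.ne')
      simp only [h, if_false, Complex.ofReal_one, mul_one]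
      exact sub_eq_zero.mp h4

theorem modf_apply (W : Matrix n n ℂ) (s : n → ℝ) (U : Matrix n n ℂ) (r : n → ℝ)
    (φ : ℝ → ℝ) :
    modf W s U r φ = ∑ p : n × n, ((φ (s p.1 / r p.2) : ℝ) : ℂ) •
      (W * Matrix.single p.1 p.2 (if r p.2 = 0 then 0 else (Wᴴ * U) p.1 p.2) * Uᴴ) := by
  have : Matrix.of (fun k i => if r i = 0 then 0 else ((φ (s k / r i) : ℝ) : ℂ) * (Wᴴ * U) k i)
      = ∑ p : n × n, ((φ (s p.1 / r p.2) : ℝ) : ℂ) •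
        Matrix.single p.1 p.2 (if r p.2 = 0 then 0 else (Wᴴ * U) p.1 p.2) := by
    rw [matrix_eq_sum_single (Matrix.of _), Fintype.sum_prod_type]
    refine Finset.sum_congr rfl fun k _ => Finset.sum_congr rfl fun i _ => ?_
    rw [smul_single]
    congr 1
    by_cases h : r i = 0 <;> simp [h]
  rw [modf, this, Matrix.mul_sum, Matrix.sum_mul]
  simp only [Matrix.mul_smul, Matrix.smul_mul]

theorem modf_sqrt {W U : Matrix n n ℂ} (s r : n → ℝ) (hr : ∀ i, 0 ≤ r i) :
    modf W s U r Real.sqrt =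
      spec W (fun k => Real.sqrt (s k)) * spec U (fun i => (Real.sqrt (r i))⁻¹) := by
  have : spec W (fun k => Real.sqrt (s k)) * spec U (fun i => (Real.sqrt (r i))⁻¹) =
      W * (diagonal (fun k => ((Real.sqrt (s k) : ℝ) : ℂ)) * (Wᴴ * U) *
        diagonal (fun i => (((Real.sqrt (r i))⁻¹ : ℝ) : ℂ))) * Uᴴ := by
    simp only [spec, Matrix.mul_assoc]
  rw [this, modf]
  congr 2
  ext k i
  rw [mul_diagonal, diagonal_mul, of_apply]
  by_cases h : r i = 0
  · simp [h]
  · rw [Real.sqrt_div' _ (hr i)]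
    simp only [h, if_false]
    push_cast
    ring

/-- The weights `|(Wᴴ U) k i|² r i` of the spectral measure of the relative modular operator sum
over `i` to the diagonal of `ρ` in the eigenbasis `W` of `σ`. -/
theorem weight_sum {U : Matrix n n ℂ} (W : Matrix n n ℂ) (r : n → ℝ) (k : n) :
    ∑ i, Complex.normSq ((Wᴴ * U) k i) * r i = ((Wᴴ * spec U r * W) k k).re := by
  have : Wᴴ * spec U r * W = (Wᴴ * U) * diagonal (fun i => (r i : ℂ)) * (Wᴴ * U)ᴴ := by
    simp only [spec, conjTranspose_mul, conjTranspose_conjTranspose, Matrix.mul_assoc]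
  rw [this, mul_apply, Complex.re_sum]
  refine Finset.sum_congr rfl fun i _ => ?_
  rw [mul_diagonal, conjTranspose_apply]
  simp only [Complex.mul_re, Complex.star_def, Complex.conj_re, Complex.conj_im,
    Complex.ofReal_re, Complex.ofReal_im, Complex.mul_im, Complex.normSq_apply]
  ring

theorem col_norm {W U : Matrix n n ℂ} (hW' : W * Wᴴ = 1) (hU : Uᴴ * U = 1) (i : n) :
    ∑ k, Complex.normSq ((Wᴴ * U) k i) = 1 := by
  have h : (Wᴴ * U)ᴴ * (Wᴴ * U) = 1 := by
    calc (Wᴴ * U)ᴴ * (Wᴴ * U) = Uᴴ * (W * Wᴴ) * U := by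
          simp only [conjTranspose_mul, conjTranspose_conjTranspose, Matrix.mul_assoc]
      _ = 1 := by rw [hW', Matrix.mul_one, hU]
  have h1 := congrFun (congrFun h i) i
  rw [mul_apply, one_apply_eq] at h1
  have h2 := congrArg Complex.re h1
  rw [Complex.re_sum, Complex.one_re] at h2
  rw [← h2]
  refine Finset.sum_congr rfl fun k _ => ?_
  simp only [conjTranspose_apply, Complex.mul_re, Complex.star_def, Complex.conj_re,
    Complex.conj_im, Complex.normSq_apply]
  ring

/-- `Tr ρ log σ - Tr ρ log ρ` in terms of the spectral weights of the relative modular operator,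
when the support of `ρ` lies in that of `σ`. -/
theorem log_weights {W U : Matrix n n ℂ} (hW' : W * Wᴴ = 1) (hU : Uᴴ * U = 1) (s r : n → ℝ)
    (hsup : ∀ k i, s k = 0 → Complex.normSq ((Wᴴ * U) k i) * r i = 0) :
    ∑ k, ∑ i, Complex.normSq ((Wᴴ * U) k i) * r i * Real.log (s k / r i) =
      ∑ k, ((Wᴴ * spec U r * W) k k).re * Real.log (s k) - ∑ i, r i * Real.log (r i) := by
  have e : ∀ k i, Complex.normSq ((Wᴴ * U) k i) * r i * Real.log (s k / r i) =
      Complex.normSq ((Wᴴ * U) k i) * r i * Real.log (s k)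
        - Complex.normSq ((Wᴴ * U) k i) * (r i * Real.log (r i)) := by
    intro k i
    by_cases h0 : r i = 0
    · simp [h0]
    by_cases h1 : s k = 0
    · have := hsup k i h1
      have h2 := (mul_eq_zero.mp this).resolve_right h0
      simp [h2]
    rw [Real.log_div h1 h0]
    ring
  simp only [e, Finset.sum_sub_distrib]
  congr 1
  · refine Finset.sum_congr rfl fun k _ => ?_
    rw [← weight_sum, Finset.sum_mul]
  · rw [Finset.sum_comm]
    refine Finset.sum_congr rfl fun i _ => ?_
    rw [← Finset.sum_mul, col_norm hW' hU, one_mul]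

end Pair

/-- Equality in the data processing inequality for the relative entropy, in spectral coordinates.
If `Φ` is dual to the reduction `(ρ, σ) ↦ (ρ', σ')`, then each resolvent of the reduced
relative modular operator yields a competitor for the full variational problem; equality of the
relative entropies makes all of them optimal, and hence
`σ^{1/2} ρ^{-1/2} = Φ(σ'^{1/2} ρ'^{-1/2}) supp ρ`. -/
theorem dpi_equality {n m : Type*} [Fintype n] [DecidableEq n] [Fintype m] [DecidableEq m]
    (Φ : Matrix m m ℂ →⋆ₐ[ℂ] Matrix n n ℂ)
    {W U : Matrix n n ℂ} (hW : Wᴴ * W = 1) (hW' : W * Wᴴ = 1) (hU : Uᴴ * U = 1) (hU' : U * Uᴴ = 1)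
    {V T : Matrix m m ℂ} (hV : Vᴴ * V = 1) (hV' : V * Vᴴ = 1) (hT : Tᴴ * T = 1)
    {s r : n → ℝ} (hs : ∀ i, 0 ≤ s i) (hr : ∀ i, 0 ≤ r i)
    {s' r' : m → ℝ} (hs' : ∀ i, 0 ≤ s' i) (hr' : ∀ i, 0 ≤ r' i)
    (hΦρ : ∀ X, (Φ X * spec U r).trace = (X * spec T r').trace)
    (hΦσ : ∀ X, (Φ X * spec W s).trace = (X * spec V s').trace)
    (hsup : ∀ k i, s k = 0 → Complex.normSq ((Wᴴ * U) k i) * r i = 0)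
    (hsup' : ∀ k i, s' k = 0 → Complex.normSq ((Vᴴ * T) k i) * r' i = 0)
    (heq : ∑ k, ∑ i, Complex.normSq ((Wᴴ * U) k i) * r i * Real.log (s k / r i) =
      ∑ k, ∑ i, Complex.normSq ((Vᴴ * T) k i) * r' i * Real.log (s' k / r' i)) :
    spec W (fun k => Real.sqrt (s k)) * spec U (fun i => (Real.sqrt (r i))⁻¹) =
      Φ (spec V (fun k => Real.sqrt (s' k)) * spec T (fun i => (Real.sqrt (r' i))⁻¹)) *
        spec U (fun i => if r i = 0 then 0 else 1) := by
  have hquad : ∀ t X, quad (spec U r) (spec W s) t (Φ X) = quad (spec T r') (spec V s') t X := by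
    intro t X
    have hstar : (Φ X)ᴴ = Φ Xᴴ := (map_star Φ X).symm
    rw [quad, quad, hstar, ← map_mul, ← map_mul, hΦρ, hΦρ, hΦσ]
  have htot : ∑ i, r i = ∑ i, r' i := by
    have := hΦρ 1
    rw [map_one, Matrix.one_mul, Matrix.one_mul, spec_trace hU, spec_trace hT] at this
    exact_mod_cast this
  have hle : ∀ t : ℝ, 0 < t → resF V s' T r' t ≤ resF W s U r t := by
    intro t ht
    rw [← quad_modf hV hT hs' hr' ht, ← hquad]
    exact (quad_le hW hW' hU hU' hs hr ht _).1
  have hres : ∀ t : ℝ, 0 < t → resF V s' T r' t = resF W s U r t := by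
    let w : (n × n) ⊕ (m × m) → ℝ := Sum.elim
      (fun p => Complex.normSq ((Wᴴ * U) p.1 p.2) * r p.2)
      (fun p => - (Complex.normSq ((Vᴴ * T) p.1 p.2) * r' p.2))
    let x : (n × n) ⊕ (m × m) → ℝ := Sum.elim (fun p => s p.1 / r p.2) (fun p => s' p.1 / r' p.2)
    have hsplit : ∀ t : ℝ, ∑ i, w i * (x i + t)⁻¹ = resF W s U r t - resF V s' T r' t := by
      intro t
      simp only [Fintype.sum_sum_type, w, x, Sum.elim_inl, Sum.elim_inr, Fintype.sum_prod_type,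
        neg_mul, Finset.sum_neg_distrib, resF, sub_eq_add_neg]
    have := log_rigidity w x ?_ ?_ ?_ ?_ ?_
    · intro t ht
      have h := this t ht
      rw [hsplit] at h
      linarith
    · rintro (p | p)
      · exact div_nonneg (hs _) (hr _)
      · exact div_nonneg (hs' _) (hr' _)
    · rintro (p | p) h
      · rcases div_eq_zero_iff.mp h with h | h
        · exact hsup _ _ h
        · simp [w, h]
      · rcases div_eq_zero_iff.mp h with h | h
        · simp only [w, Sum.elim_inr, hsup' _ _ h, neg_zero]
        · simp [w, h]
    · simp only [Fintype.sum_sum_type, w, Sum.elim_inl, Sum.elim_inr,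
        Finset.sum_neg_distrib]
      rw [Fintype.sum_prod_type_right, Fintype.sum_prod_type_right]
      simp only [← Finset.sum_mul, col_norm hW' hU, col_norm hV' hT, one_mul]
      rw [htot]; ring
    · simp only [Fintype.sum_sum_type, w, x, Sum.elim_inl, Sum.elim_inr, Fintype.sum_prod_type,
        neg_mul, Finset.sum_neg_distrib]
      rw [heq]; ring
    · intro t ht
      rw [hsplit]
      linarith [hle t ht]
  set P := spec U (fun i => if r i = 0 then 0 else 1) with hP
  have hmod : ∀ t : ℝ, 0 < t → Φ (modf V s' T r' fun l => (l + t)⁻¹) * P =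
      modf W s U r fun l => (l + t)⁻¹ := by
    intro t ht
    apply (quad_le hW hW' hU hU' hs hr ht _).2
    rw [hquad, quad_modf hV hT hs' hr' ht, hres t ht]
  have hall : ∀ φ : ℝ → ℝ, modf W s U r φ - Φ (modf V s' T r' φ) * P = 0 := by
    let x : (n × n) ⊕ (m × m) → ℝ := Sum.elim (fun p => s p.1 / r p.2) (fun p => s' p.1 / r' p.2)
    let M : (n × n) ⊕ (m × m) → Matrix n n ℂ := Sum.elim
      (fun p => W * Matrix.single p.1 p.2 (if r p.2 = 0 then 0 else (Wᴴ * U) p.1 p.2) * Uᴴ)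
      (fun p => - (Φ (V * Matrix.single p.1 p.2
        (if r' p.2 = 0 then 0 else (Vᴴ * T) p.1 p.2) * Tᴴ) * P))
    have hsplit : ∀ φ : ℝ → ℝ, modf W s U r φ - Φ (modf V s' T r' φ) * P =
        ∑ p, ((φ (x p) : ℝ) : ℂ) • M p := by
      intro φ
      rw [modf_apply, modf_apply]
      simp only [Fintype.sum_sum_type, M, x, Sum.elim_inl, Sum.elim_inr, map_sum, map_smul,
        Matrix.sum_mul, Matrix.smul_mul, smul_neg, Finset.sum_neg_distrib, sub_eq_add_neg]
    intro φ
    rw [hsplit]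
    ext a b
    have := resolvent_indep (fun p => M p a b) x ?_ ?_ φ
    · rw [Matrix.sum_apply]
      simp only [Matrix.smul_apply, smul_eq_mul, Matrix.zero_apply]
      rw [← this]
      exact Finset.sum_congr rfl fun p _ => mul_comm _ _
    · rintro (p | p)
      · exact div_nonneg (hs _) (hr _)
      · exact div_nonneg (hs' _) (hr' _)
    · intro t ht
      have h := hsplit fun l => (l + t)⁻¹
      rw [hmod t ht, sub_self] at h
      have h := congrFun (congrFun h a) b
      rw [Matrix.sum_apply] at h
      simp only [Matrix.smul_apply, smul_eq_mul, Matrix.zero_apply] at h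
      rw [h]
      exact Finset.sum_congr rfl fun p _ => mul_comm _ _
  have := hall Real.sqrt
  rw [modf_sqrt s r hr, modf_sqrt s' r' hr'] at this
  exact sub_eq_zero.mp this

/-! ### Fixed points of a unital completely positive map -/

section FixedPoints
variable {n ι : Type*} [Fintype n] [DecidableEq n] [Fintype ι]

theorem sum_trace_eq_zero {D : ι → Matrix n n ℂ} (h : ∑ i, ((D i)ᴴ * D i).trace = 0) (i : ι) :
    D i = 0 := by
  have h1 := (Finset.sum_eq_zero_iff_of_nonneg
    (fun i _ => (posSemidef_conjTranspose_mul_self (D i)).trace_nonneg)).mp h i (Finset.mem_univ i)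
  exact trace_conjTranspose_mul_self_eq_zero_iff.mp h1

/-- For a self-adjoint family `a` with `∑ aᵢ aᵢᴴ = b²`, a fixed point of the unital completely
positive map `y ↦ b⁻¹ (∑ aᵢ y aᵢᴴ) b⁻¹` commutes with its Kraus operators: the invariant state
`Tr b² ·` turns the Schwarz inequality for `yᴴy` into an equality. -/
theorem fixed_commutes {a : ι → Matrix n n ℂ} {τ : ι ≃ ι} (hτ : ∀ i, a (τ i) = (a i)ᴴ)
    {b bi : Matrix n n ℂ} (hb : bᴴ = b) (hbi : b * bi = 1)
    (hsum : ∑ i, a i * (a i)ᴴ = b * b) {y : Matrix n n ℂ}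
    (hy : ∑ i, a i * y * (a i)ᴴ = b * y * b) (i : ι) :
    y * (a i * bi) = a i * bi * y := by
  have hbi' : bi * b = 1 := mul_eq_one_comm.mp hbi
  have hbih : biᴴ = bi := by
    have h1 : biᴴ * b = 1 := by
      rw [← conjTranspose_one, ← hbi, conjTranspose_mul, hb]
    calc biᴴ = biᴴ * (b * bi) := by rw [hbi, Matrix.mul_one]
      _ = bi := by rw [← Matrix.mul_assoc, h1, Matrix.one_mul]
  have hy' : ∑ i, a i * yᴴ * (a i)ᴴ = b * yᴴ * b := by
    have := congrArg conjTranspose hy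
    rw [conjTranspose_sum] at this
    simpa only [conjTranspose_mul, conjTranspose_conjTranspose, hb, Matrix.mul_assoc] using this
  have hsum' : ∑ i, (a i)ᴴ * a i = b * b := by
    rw [← hsum, ← Equiv.sum_comp τ]
    simp [hτ]
  set z := bi * y * b with hz
  have hzH : zᴴ = b * yᴴ * bi := by
    simp only [hz, conjTranspose_mul, hb, hbih, Matrix.mul_assoc]
  have hbz : b * z = y * b := by
    rw [hz, ← Matrix.mul_assoc, ← Matrix.mul_assoc, hbi, Matrix.one_mul]
  have hzb : zᴴ * b = b * yᴴ := by
    rw [hzH, Matrix.mul_assoc, hbi', Matrix.mul_one]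
  have hD : ∀ i, y * (a i)ᴴ - (a i)ᴴ * z = 0 := by
    apply sum_trace_eq_zero
    have e : ∀ i, ((y * (a i)ᴴ - (a i)ᴴ * z)ᴴ * (y * (a i)ᴴ - (a i)ᴴ * z)).trace =
        (yᴴ * y * ((a i)ᴴ * a i)).trace - ((a i * yᴴ * (a i)ᴴ) * z).trace
          - (zᴴ * (a i * y * (a i)ᴴ)).trace + (zᴴ * (a i * (a i)ᴴ) * z).trace := by
      intro i
      have t1 : (yᴴ * y * ((a i)ᴴ * a i)).trace = (a i * yᴴ * (y * (a i)ᴴ)).trace := by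
        rw [Matrix.mul_assoc (a i), trace_mul_comm (a i)]
        simp only [Matrix.mul_assoc]
      rw [t1, ← trace_sub, ← trace_sub, ← trace_add]
      congr 1
      simp only [conjTranspose_sub, conjTranspose_mul, conjTranspose_conjTranspose,
        Matrix.sub_mul, Matrix.mul_sub, Matrix.mul_assoc]
      abel
    simp only [e, Finset.sum_add_distrib, Finset.sum_sub_distrib, ← trace_sum, ← Matrix.mul_sum,
      ← Matrix.sum_mul, hsum, hsum', hy, hy']
    have e1 : (yᴴ * y * (b * b)).trace = (b * yᴴ * (y * b)).trace := by
      rw [Matrix.mul_assoc b, trace_mul_comm b]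
      simp only [Matrix.mul_assoc]
    have e2 : b * yᴴ * b * z = b * yᴴ * (y * b) := by rw [Matrix.mul_assoc (b * yᴴ), hbz]
    have e3 : zᴴ * (b * y * b) = b * yᴴ * (y * b) := by
      rw [Matrix.mul_assoc b, ← Matrix.mul_assoc, hzb]
    have e4 : zᴴ * (b * b) * z = b * yᴴ * (y * b) := by
      rw [← Matrix.mul_assoc zᴴ b b, hzb, Matrix.mul_assoc, hbz]
    rw [e1, e2, e3, e4]
    ring
  have h1 := hD (τ.symm i)
  have h2 : (a (τ.symm i))ᴴ = a i := by rw [← hτ, Equiv.apply_symm_apply]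
  rw [h2, sub_eq_zero] at h1
  rw [← Matrix.mul_assoc, h1, hz]
  simp only [Matrix.mul_assoc, hbi, Matrix.mul_one]

/-- The fixed-point algebra is the commutant of the Kraus operators `aᵢ b⁻¹`. -/
abbrev fixAlg (a : ι → Matrix n n ℂ) (bi : Matrix n n ℂ) : Subalgebra ℂ (Matrix n n ℂ) :=
  Subalgebra.centralizer ℂ (Set.range fun i => a i * bi)

theorem mem_fixAlg {a : ι → Matrix n n ℂ} {bi y : Matrix n n ℂ} :
    y ∈ fixAlg a bi ↔ ∀ i, y * (a i * bi) = a i * bi * y := by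
  simp only [fixAlg, Subalgebra.mem_centralizer_iff, Set.forall_mem_range]
  exact forall_congr' fun i => eq_comm

theorem fixAlg_fixed {a : ι → Matrix n n ℂ} {τ : ι ≃ ι} (hτ : ∀ i, a (τ i) = (a i)ᴴ)
    {b bi : Matrix n n ℂ} (hbi : b * bi = 1)
    (hsum : ∑ i, a i * (a i)ᴴ = b * b) {y : Matrix n n ℂ} (hy : y ∈ fixAlg a bi) :
    ∑ i, a i * y * (a i)ᴴ = b * y * b := by
  rw [mem_fixAlg] at hy
  have hbi' : bi * b = 1 := mul_eq_one_comm.mp hbi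
  have h1 : ∀ i, y * a i = a i * bi * y * b := by
    intro i
    rw [← hy i, ← Matrix.mul_assoc, Matrix.mul_assoc, hbi', Matrix.mul_one]
  have h2 : ∀ i, a i * y * (a i)ᴴ = a i * (a i)ᴴ * (bi * y * b) := by
    intro i
    rw [← hτ, Matrix.mul_assoc, h1]
    simp only [Matrix.mul_assoc]
  simp only [h2, ← Matrix.sum_mul, hsum]
  simp only [Matrix.mul_assoc]
  rw [← Matrix.mul_assoc b bi, hbi, Matrix.one_mul]

theorem fixAlg_star {a : ι → Matrix n n ℂ} {τ : ι ≃ ι} (hτ : ∀ i, a (τ i) = (a i)ᴴ)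
    {b bi : Matrix n n ℂ} (hb : bᴴ = b) (hbi : b * bi = 1)
    (hsum : ∑ i, a i * (a i)ᴴ = b * b) {y : Matrix n n ℂ} (hy : y ∈ fixAlg a bi) :
    yᴴ ∈ fixAlg a bi := by
  rw [mem_fixAlg]
  apply fixed_commutes hτ hb hbi hsum
  have := congrArg conjTranspose (fixAlg_fixed hτ hbi hsum hy)
  rw [conjTranspose_sum] at this
  simpa only [conjTranspose_mul, conjTranspose_conjTranspose, hb, Matrix.mul_assoc] using this

theorem fixAlg_comm_left {a : ι → Matrix n n ℂ} {τ : ι ≃ ι} (hτ : ∀ i, a (τ i) = (a i)ᴴ)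
    {b bi : Matrix n n ℂ} (hb : bᴴ = b) (hbi : b * bi = 1)
    (hsum : ∑ i, a i * (a i)ᴴ = b * b) {y : Matrix n n ℂ} (hy : y ∈ fixAlg a bi) (i : ι) :
    y * (bi * a i) = bi * a i * y := by
  have hbih : biᴴ = bi := by
    have h1 : biᴴ * b = 1 := by
      rw [← conjTranspose_one, ← hbi, conjTranspose_mul, hb]
    calc biᴴ = biᴴ * (b * bi) := by rw [hbi, Matrix.mul_one]
      _ = bi := by rw [← Matrix.mul_assoc, h1, Matrix.one_mul]
  have h := mem_fixAlg.mp (fixAlg_star hτ hb hbi hsum hy) (τ i)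
  have h1 := congrArg conjTranspose h
  simp only [conjTranspose_mul, conjTranspose_conjTranspose, hτ, hbih] at h1
  exact h1.symm

/-- The fixed-point algebra is invariant under conjugation by `b`. -/
theorem fixAlg_conj {a : ι → Matrix n n ℂ} {τ : ι ≃ ι} (hτ : ∀ i, a (τ i) = (a i)ᴴ)
    {b bi : Matrix n n ℂ} (hb : bᴴ = b) (hbi : b * bi = 1)
    (hsum : ∑ i, a i * (a i)ᴴ = b * b) {y : Matrix n n ℂ} (hy : y ∈ fixAlg a bi) :
    b * y * bi ∈ fixAlg a bi := by
  rw [mem_fixAlg]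
  intro i
  have h := fixAlg_comm_left hτ hb hbi hsum hy i
  have hbi' : bi * b = 1 := mul_eq_one_comm.mp hbi
  calc b * y * bi * (a i * bi) = b * (y * (bi * a i)) * bi := by simp only [Matrix.mul_assoc]
    _ = (b * bi) * a i * y * bi := by rw [h]; simp only [Matrix.mul_assoc]
    _ = a i * (bi * b) * y * bi := by rw [hbi, hbi', Matrix.one_mul, Matrix.mul_one]
    _ = _ := by simp only [Matrix.mul_assoc]

end FixedPoints

section Factor
variable {n : Type*} [Fintype n] [DecidableEq n]

/-- If a positive definite `b` normalizes a star-closed algebra `N`, then `b = h k` with `h ∈ N`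
and `k` in the commutant of `N`. Here `h` is the trace-preserving conditional expectation of `b`,
that is, the element of `N` with `Tr (h x) = Tr (b x)` for all `x ∈ N`. -/
theorem exists_factor (N : Subalgebra ℂ (Matrix n n ℂ)) (hN : ∀ x ∈ N, xᴴ ∈ N)
    {b bi : Matrix n n ℂ} (hb : b.PosDef) (hbi : b * bi = 1)
    (hconj : ∀ x ∈ N, b * x * bi ∈ N) :
    ∃ h k : Matrix n n ℂ, h ∈ N ∧ (∀ x ∈ N, k * x = x * k) ∧ b = h * k := by
  have hbi' : bi * b = 1 := mul_eq_one_comm.mp hbi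
  -- the trace form on `N` is nondegenerate
  have nondeg : ∀ x ∈ N, (∀ z ∈ N, (x * z).trace = 0) → x = 0 := by
    intro x hx hz
    exact trace_mul_conjTranspose_self_eq_zero_iff.mp (hz _ (hN x hx))
  let B : N →ₗ[ℂ] Module.Dual ℂ N :=
    LinearMap.mk₂ ℂ (fun x z : N => ((x : Matrix n n ℂ) * (z : Matrix n n ℂ)).trace)
      (fun x y z => by simp [Matrix.add_mul]) (fun c x z => by simp)
      (fun x y z => by simp [Matrix.mul_add]) (fun c x z => by simp)
  have hBinj : Function.Injective B := by
    rw [injective_iff_map_eq_zero]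
    intro x hx
    apply Subtype.ext
    apply nondeg x x.2
    intro z hz
    exact LinearMap.congr_fun hx ⟨z, hz⟩
  have hBsurj : Function.Surjective B :=
    (LinearMap.injective_iff_surjective_of_finrank_eq_finrank
      (Subspace.dual_finrank_eq).symm).mp hBinj
  let φ : Module.Dual ℂ N :=
    { toFun := fun z => (b * (z : Matrix n n ℂ)).trace
      map_add' := fun x y => by simp [Matrix.mul_add]
      map_smul' := fun c x => by simp }
  obtain ⟨h, hh⟩ := hBsurj φ
  have htr : ∀ x ∈ N, ((h : Matrix n n ℂ) * x).trace = (b * x).trace := fun x hx =>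
    LinearMap.congr_fun hh ⟨x, hx⟩
  have hmod : ∀ x ∈ N, (h : Matrix n n ℂ) * x = b * x * bi * h := by
    intro x hx
    have hα := hconj x hx
    rw [← sub_eq_zero]
    apply nondeg _ (N.sub_mem (N.mul_mem h.2 hx) (N.mul_mem hα h.2))
    intro z hz
    rw [Matrix.sub_mul, trace_sub, sub_eq_zero, Matrix.mul_assoc, htr _ (N.mul_mem hx hz)]
    have h1 : (b * x * bi * h * z).trace = (h * (z * (b * x * bi))).trace := by
      rw [Matrix.mul_assoc, trace_mul_comm, Matrix.mul_assoc]
    have h2 : (b * (z * (b * x * bi))).trace = ((bi * b) * (z * (b * x))).trace := by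
      rw [← Matrix.mul_assoc, ← Matrix.mul_assoc, trace_mul_comm]
      simp only [Matrix.mul_assoc]
    rw [h1, htr _ (N.mul_mem hz hα), h2, hbi', Matrix.one_mul, trace_mul_comm z,
      Matrix.mul_assoc]
  -- left multiplication by `h` is injective on `N`, hence surjective
  let Lh : N →ₗ[ℂ] N := LinearMap.mulLeft ℂ h
  have hLinj : Function.Injective Lh := by
    rw [injective_iff_map_eq_zero]
    intro x hx
    have hx' : (h : Matrix n n ℂ) * x = 0 := congrArg Subtype.val hx
    have h1 : ((x : Matrix n n ℂ)ᴴ * b * x).trace = 0 := by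
      rw [Matrix.mul_assoc, trace_mul_comm, Matrix.mul_assoc,
        ← htr _ (N.mul_mem x.2 (hN _ x.2)), ← Matrix.mul_assoc, hx', Matrix.zero_mul, trace_zero]
    have h2 : ((x : Matrix n n ℂ)ᴴ * b * x).PosSemidef := hb.posSemidef.conjTranspose_mul_mul_same _
    have h3 := h2.trace_eq_zero_iff.mp h1
    apply Subtype.ext
    ext i j
    have h4 : star ((x : Matrix n n ℂ) *ᵥ Pi.single j 1) ⬝ᵥ (b *ᵥ ((x : Matrix n n ℂ) *ᵥ
        Pi.single j 1)) = 0 := by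
      rw [star_mulVec, ← dotProduct_mulVec, mulVec_mulVec, mulVec_mulVec, h3]
      simp
    by_contra hne
    have h5 : (x : Matrix n n ℂ) *ᵥ Pi.single j 1 ≠ 0 := by
      intro h0
      apply hne
      have := congrFun h0 i
      simpa using this
    exact (hb.dotProduct_mulVec_pos h5).ne' h4
  have hLsurj : Function.Surjective Lh := LinearMap.injective_iff_surjective.mp hLinj
  obtain ⟨g, hg⟩ := hLsurj 1
  have hg' : (h : Matrix n n ℂ) * g = 1 := congrArg Subtype.val hg
  have hg'' : (g : Matrix n n ℂ) * h = 1 := mul_eq_one_comm.mp hg'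
  refine ⟨h, g * b, h.2, ?_, ?_⟩
  · intro x hx
    calc (g : Matrix n n ℂ) * b * x = g * (b * x * bi) * b := by
          simp only [Matrix.mul_assoc, hbi', Matrix.mul_one]
      _ = g * (b * x * bi * (h * g)) * b := by
          rw [hg', Matrix.mul_one]
      _ = (g * h) * x * g * b := by
          rw [← Matrix.mul_assoc (b * x * bi), ← hmod x hx]; simp only [Matrix.mul_assoc]
      _ = x * (g * b) := by rw [hg'', Matrix.one_mul, Matrix.mul_assoc]
  · rw [← Matrix.mul_assoc, hg', Matrix.one_mul]

end Factor

/-! ### Block structure of a star-closed matrix algebra and its commutant -/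

section Structure
variable {n : Type*} [Fintype n] [DecidableEq n]

/-- A nonzero orthogonal projection belonging to the algebra `N`. -/
def IsProjIn (N : Subalgebra ℂ (Matrix n n ℂ)) (p : Matrix n n ℂ) : Prop :=
  p ∈ N ∧ p * p = p ∧ pᴴ = p ∧ p ≠ 0

/-- A projection `p` is minimal in `N` when `p N p = ℂ p`. -/
def IsMinIn (N : Subalgebra ℂ (Matrix n n ℂ)) (p : Matrix n n ℂ) : Prop :=
  ∀ x ∈ N, ∃ c : ℂ, p * x * p = c • p

theorem spectral_form {M : Matrix n n ℂ} (hM : M.IsHermitian) :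
    M = spec (hM.eigenvectorUnitary : Matrix n n ℂ) hM.eigenvalues ∧
    (hM.eigenvectorUnitary : Matrix n n ℂ)ᴴ * (hM.eigenvectorUnitary : Matrix n n ℂ) = 1 ∧
    (hM.eigenvectorUnitary : Matrix n n ℂ) * (hM.eigenvectorUnitary : Matrix n n ℂ)ᴴ = 1 := by
  refine ⟨?_, Unitary.coe_star_mul_self _, Unitary.coe_mul_star_self _⟩
  have := hM.spectral_theorem
  rw [Unitary.conjStarAlgAut_apply] at this
  exact this

/-- A projection which is not minimal has a proper nonzero subprojection, namely a spectral
projection of some Hermitian element of the corner algebra. -/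
theorem exists_subproj {S : Set (Matrix n n ℂ)}
    (hstar : ∀ x ∈ Subalgebra.centralizer ℂ S, xᴴ ∈ Subalgebra.centralizer ℂ S)
    {p : Matrix n n ℂ} (hp : IsProjIn (Subalgebra.centralizer ℂ S) p)
    (hmin : ¬ IsMinIn (Subalgebra.centralizer ℂ S) p) :
    ∃ q, IsProjIn (Subalgebra.centralizer ℂ S) q ∧ q ≠ p ∧ p * q = q ∧ q * p = q := by
  set N := Subalgebra.centralizer ℂ S with hN
  by_contra hno
  apply hmin
  obtain ⟨hpN, hpp, hph, hp0⟩ := hp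
  have herm : ∀ x ∈ N, xᴴ = x → ∃ c : ℂ, p * x * p = c • p := by
    intro x hx hxh
    set y := p * x * p with hy
    have hyN : y ∈ N := N.mul_mem (N.mul_mem hpN hx) hpN
    have hyh : y.IsHermitian := by
      rw [Matrix.IsHermitian, hy]
      simp only [conjTranspose_mul, hph, hxh, Matrix.mul_assoc]
    obtain ⟨hsp, hU, hU'⟩ := spectral_form hyh
    set U := (hyh.eigenvectorUnitary : Matrix n n ℂ)
    set f := hyh.eigenvalues
    have hpy : p * y = y := by simp only [hy, ← Matrix.mul_assoc, hpp]
    have hyp : y * p = y := by simp only [hy, Matrix.mul_assoc, hpp]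
    -- some eigenvector is not annihilated by `p`
    have hex : ∃ i, ∃ a, (p * U) a i ≠ 0 := by
      by_contra hall
      push Not at hall
      apply hp0
      have : p * U = 0 := by ext a i; exact hall i a
      rw [← Matrix.mul_one p, ← hU', ← Matrix.mul_assoc, this, Matrix.zero_mul]
    obtain ⟨i, a, hia⟩ := hex
    set q0 := spec U (fun k => if f k = f i then (1 : ℝ) else 0) with hq0
    have hq0c : ∀ z : Matrix n n ℂ, z * y = y * z → z * q0 = q0 * z := by
      intro z hz
      rw [hsp] at hz
      exact spec_commute hU hU' f (fun v => if v = f i then (1 : ℝ) else 0) hz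
    have hq0N : q0 ∈ N := by
      rw [hN, Subalgebra.mem_centralizer_iff]
      intro g hg
      exact hq0c g ((Subalgebra.mem_centralizer_iff ℂ).mp hyN g hg)
    have hq0p : p * q0 = q0 * p := hq0c p (by rw [hpy, hyp])
    have hq0q : q0 * q0 = q0 := by
      rw [hq0, spec_mul hU]; congr 1; ext k; split_ifs <;> simp
    have hq0h : q0ᴴ = q0 := spec_conjTranspose _ _
    have hyq : y * q0 = (f i : ℂ) • q0 := by
      have : (f i : ℂ) • q0 = spec U (fun k => f i * if f k = f i then (1 : ℝ) else 0) := by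
        rw [hq0, spec, spec, ← Matrix.smul_mul, ← Matrix.mul_smul]
        congr 2
        ext k j
        rw [Matrix.smul_apply, diagonal_apply, diagonal_apply]
        split_ifs <;> simp
      rw [this, hsp, hq0, spec_mul hU]
      congr 1; ext k
      by_cases h : f k = f i <;> simp [h]
    have hqU : (q0 * U) a i = U a i ∧ (p * q0 * U) a i = (p * U) a i := by
      have e : q0 * U = U * diagonal (fun k => ((if f k = f i then (1 : ℝ) else 0 : ℝ) : ℂ)) := by
        rw [hq0, spec, Matrix.mul_assoc, hU, Matrix.mul_one]
      constructor
      · rw [e, mul_diagonal]; simp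
      · rw [Matrix.mul_assoc, e, ← Matrix.mul_assoc, mul_diagonal]; simp
    have hq : IsProjIn N (p * q0) := by
      refine ⟨N.mul_mem hpN hq0N, ?_, ?_, ?_⟩
      · calc p * q0 * (p * q0) = p * (q0 * p) * q0 := by simp only [Matrix.mul_assoc]
          _ = (p * p) * (q0 * q0) := by rw [← hq0p]; simp only [Matrix.mul_assoc]
          _ = p * q0 := by rw [hpp, hq0q]
      · rw [conjTranspose_mul, hph, hq0h, hq0p]
      · intro h0
        apply hia
        rw [← hqU.2, h0, Matrix.zero_mul]
        rfl
    have hqp : p * q0 = p := by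
      by_contra hne
      refine hno ⟨p * q0, hq, hne, ?_, ?_⟩
      · rw [← Matrix.mul_assoc, hpp]
      · rw [hq0p, Matrix.mul_assoc, hpp]
    refine ⟨f i, ?_⟩
    calc y = y * (p * q0) := by rw [hqp, hyp]
      _ = p * (y * q0) := by rw [← Matrix.mul_assoc, hyp, ← Matrix.mul_assoc, hpy]
      _ = _ := by rw [hyq, Matrix.mul_smul, hqp]
  intro x hx
  have hxs := hstar x hx
  obtain ⟨c, hc⟩ := herm (x + xᴴ) (N.add_mem hx hxs) (by
    rw [conjTranspose_add, conjTranspose_conjTranspose, add_comm])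
  obtain ⟨d, hd⟩ := herm (Complex.I • (x - xᴴ)) (N.smul_mem (N.sub_mem hx hxs) _) (by
    rw [conjTranspose_smul, conjTranspose_sub, conjTranspose_conjTranspose, Complex.star_def,
      Complex.conj_I, neg_smul, ← smul_neg, neg_sub])
  refine ⟨(1 / 2 : ℂ) * (c - Complex.I * d), ?_⟩
  have hx2 : x = (1 / 2 : ℂ) • ((x + xᴴ) - Complex.I • (Complex.I • (x - xᴴ))) := by
    rw [smul_smul, Complex.I_mul_I, neg_one_smul, sub_neg_eq_add, add_add_sub_cancel, ← two_smul ℂ,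
      smul_smul]
    norm_num
  calc p * x * p = p * ((1 / 2 : ℂ) • ((x + xᴴ) - Complex.I • (Complex.I • (x - xᴴ)))) * p := by
        rw [← hx2]
    _ = (1 / 2 : ℂ) • (p * (x + xᴴ) * p - Complex.I • (p * (Complex.I • (x - xᴴ)) * p)) := by
        rw [Matrix.mul_smul, Matrix.smul_mul, Matrix.mul_sub, Matrix.sub_mul, Matrix.mul_smul p
          Complex.I (Complex.I • (x - xᴴ)), Matrix.smul_mul Complex.I]
    _ = _ := by rw [hc, hd, smul_smul, ← sub_smul, smul_smul]

/-- The unit of a star-closed commutant is a sum of pairwise orthogonal minimal projections. -/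
theorem exists_minimal_family {S : Set (Matrix n n ℂ)}
    (hstar : ∀ x ∈ Subalgebra.centralizer ℂ S, xᴴ ∈ Subalgebra.centralizer ℂ S) :
    ∃ (m : ℕ) (P : Fin m → Matrix n n ℂ),
      (∀ i, IsProjIn (Subalgebra.centralizer ℂ S) (P i)) ∧ (∀ i j, i ≠ j → P i * P j = 0) ∧
      ∑ i, P i = 1 ∧ ∀ i, IsMinIn (Subalgebra.centralizer ℂ S) (P i) := by
  classical
  set N := Subalgebra.centralizer ℂ S
  let Fam : ℕ → Prop := fun m => ∃ P : Fin m → Matrix n n ℂ,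
    (∀ i, IsProjIn N (P i)) ∧ (∀ i j, i ≠ j → P i * P j = 0) ∧ ∑ i, P i = 1
  have hbound : ∀ m, Fam m → m ≤ Module.finrank ℂ (Matrix n n ℂ) := by
    rintro m ⟨P, hP, hort, -⟩
    have hli : LinearIndependent ℂ P := by
      rw [Fintype.linearIndependent_iff]
      intro c hc j
      have h1 : (∑ i, c i • P i) * P j = c j • P j := by
        rw [Matrix.sum_mul, Finset.sum_eq_single j]
        · rw [Matrix.smul_mul, (hP j).2.1]
        · intro i _ hij
          rw [Matrix.smul_mul, hort i j hij, smul_zero]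
        · simp
      rw [hc, Matrix.zero_mul] at h1
      exact (smul_eq_zero.mp h1.symm).resolve_right (hP j).2.2.2
    simpa using hli.fintype_card_le_finrank
  have hne : ∃ m, Fam m := by
    by_cases h : (1 : Matrix n n ℂ) = 0
    · exact ⟨0, Fin.elim0, fun i => i.elim0, fun i => i.elim0, by simp [h]⟩
    · exact ⟨1, fun _ => 1, fun _ => ⟨N.one_mem, by simp, by simp, h⟩,
        fun i j hij => absurd (Subsingleton.elim i j) hij, by simp⟩
  obtain ⟨m0, hm0⟩ := hne
  set M := Nat.findGreatest Fam (Module.finrank ℂ (Matrix n n ℂ))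
  have hM : Fam M := Nat.findGreatest_spec (hbound m0 hm0) hm0
  have hmax : ¬ Fam (M + 1) := fun h => by
    have := Nat.le_findGreatest (hbound _ h) h
    exact absurd this (by simp [M])
  obtain ⟨P, hP, hort, hsum⟩ := hM
  refine ⟨M, P, hP, hort, hsum, ?_⟩
  intro i0
  by_contra hmin
  obtain ⟨q, hq, hqne, hpq, hqp⟩ := exists_subproj hstar (hP i0) hmin
  apply hmax
  have hPq : ∀ j, j ≠ i0 → P j * q = 0 ∧ q * P j = 0 := by
    intro j hj
    constructor
    · rw [← hpq, ← Matrix.mul_assoc, hort j i0 hj, Matrix.zero_mul]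
    · rw [← hqp, Matrix.mul_assoc, hort i0 j hj.symm, Matrix.mul_zero]
  have hrest : ∀ j, Function.update P i0 (P i0 - q) j * q = 0 ∧
      q * Function.update P i0 (P i0 - q) j = 0 := by
    intro j
    by_cases hj : j = i0
    · subst hj
      rw [Function.update_self, Matrix.sub_mul, Matrix.mul_sub, hpq, hqp, hq.2.1, sub_self]
      exact ⟨rfl, rfl⟩
    · rw [Function.update_of_ne hj]
      exact hPq j hj
  refine ⟨Fin.cons q (Function.update P i0 (P i0 - q)), ?_, ?_, ?_⟩
  · intro k
    refine Fin.cases ?_ (fun j => ?_) k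
    · simpa using hq
    · rw [Fin.cons_succ]
      by_cases hj : j = i0
      · subst hj
        rw [Function.update_self]
        refine ⟨N.sub_mem (hP j).1 hq.1, ?_, ?_, ?_⟩
        · rw [Matrix.sub_mul, Matrix.mul_sub, Matrix.mul_sub, hpq, hqp, hq.2.1, (hP j).2.1]
          simp
        · rw [conjTranspose_sub, (hP j).2.2.1, hq.2.2.1]
        · exact sub_ne_zero.mpr hqne.symm
      · rw [Function.update_of_ne hj]; exact hP j
  · intro k k'
    refine Fin.cases ?_ (fun j => ?_) k <;> refine Fin.cases ?_ (fun j' => ?_) k'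
    · intro h; exact absurd rfl h
    · intro _; rw [Fin.cons_zero, Fin.cons_succ]; exact (hrest j').2
    · intro _; rw [Fin.cons_zero, Fin.cons_succ]; exact (hrest j).1
    · intro h
      rw [Fin.cons_succ, Fin.cons_succ]
      have hjj : j ≠ j' := fun e => h (by rw [e])
      by_cases hj : j = i0
      · have hj' : j' ≠ i0 := fun e => hjj (hj.trans e.symm)
        subst hj
        rw [Function.update_self, Function.update_of_ne hj', Matrix.sub_mul, hort _ _ hjj,
          (hPq _ hj').2, sub_self]
      · rw [Function.update_of_ne hj]
        by_cases hj' : j' = i0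
        · subst hj'
          rw [Function.update_self, Matrix.mul_sub, hort _ _ hjj, (hPq _ hj).1, sub_self]
        · rw [Function.update_of_ne hj', hort _ _ hjj]
  · rw [Fin.sum_univ_succ, Fin.cons_zero]
    simp only [Fin.cons_succ]
    rw [Finset.sum_update_of_mem (Finset.mem_univ i0), ← add_assoc, add_sub_cancel,
      ← hsum, Finset.sdiff_singleton_eq_erase, Finset.add_sum_erase _ _ (Finset.mem_univ i0)]

/-- Two minimal projections linked by a nonzero corner `p N q` are Murray–von Neumann
equivalent in `N`. -/
theorem exists_partial_isometry {N : Subalgebra ℂ (Matrix n n ℂ)} (hstar : ∀ x ∈ N, xᴴ ∈ N)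
    {p q : Matrix n n ℂ} (hp : IsProjIn N p) (hq : IsProjIn N q) (hpm : IsMinIn N p)
    (hqm : IsMinIn N q) {x : Matrix n n ℂ} (hx : x ∈ N) (hne : p * x * q ≠ 0) :
    ∃ u ∈ N, uᴴ * u = q ∧ u * uᴴ = p := by
  obtain ⟨hpN, hpp, hph, hp0⟩ := hp
  obtain ⟨hqN, hqq, hqh, hq0⟩ := hq
  set v := p * x * q with hv
  have hvN : v ∈ N := N.mul_mem (N.mul_mem hpN hx) hqN
  have hvh : vᴴ = q * xᴴ * p := by
    simp only [hv, conjTranspose_mul, hph, hqh, Matrix.mul_assoc]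
  have hpv : p * v = v := by simp only [hv, ← Matrix.mul_assoc, hpp]
  have hvq : v * q = v := by simp only [hv, Matrix.mul_assoc, hqq]
  obtain ⟨c, hc⟩ := hqm (xᴴ * p * x) (N.mul_mem (N.mul_mem (hstar x hx) hpN) hx)
  obtain ⟨d, hd⟩ := hpm (x * q * xᴴ) (N.mul_mem (N.mul_mem hx hqN) (hstar x hx))
  have hc' : vᴴ * v = c • q := by
    rw [← hc, hvh, hv]
    calc q * xᴴ * p * (p * x * q) = q * xᴴ * (p * p) * x * q := by simp only [Matrix.mul_assoc]
      _ = _ := by rw [hpp]; simp only [Matrix.mul_assoc]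
  have hd' : v * vᴴ = d • p := by
    rw [← hd, hvh, hv]
    calc p * x * q * (q * xᴴ * p) = p * x * (q * q) * xᴴ * p := by simp only [Matrix.mul_assoc]
      _ = _ := by rw [hqq]; simp only [Matrix.mul_assoc]
  have hcd : d = c := by
    have h1 : c • v = d • v := by
      calc c • v = v * (vᴴ * v) := by rw [hc', Matrix.mul_smul, hvq]
        _ = d • v := by rw [← Matrix.mul_assoc, hd', Matrix.smul_mul, hpv]
    have h2 : (d - c) • v = 0 := by rw [sub_smul, h1, sub_self]
    exact sub_eq_zero.mp ((smul_eq_zero.mp h2).resolve_right hne)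
  have hpos : ∀ w : Matrix n n ℂ, w ≠ 0 → 0 < (wᴴ * w).trace := fun w hw =>
    lt_of_le_of_ne (posSemidef_conjTranspose_mul_self w).trace_nonneg
      (fun h => hw (trace_conjTranspose_mul_self_eq_zero_iff.mp h.symm))
  have h1 := hpos v hne
  have h2 := hpos q hq0
  rw [hqh, hqq] at h2
  rw [hc', trace_smul, smul_eq_mul] at h1
  have hcpos : 0 < c := by
    obtain ⟨e, he⟩ : ∃ e : ℝ, q.trace = e := ⟨q.trace.re, by
      apply Complex.ext
      · simp
      · simpa using (Complex.pos_iff.mp h2).2.symm⟩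
    rw [he] at h1 h2
    have he0 : 0 < e := by exact_mod_cast h2
    rw [Complex.pos_iff] at h1 ⊢
    simp only [Complex.mul_re, Complex.ofReal_re, Complex.ofReal_im, mul_zero, sub_zero,
      Complex.mul_im, zero_add] at h1
    refine ⟨(mul_pos_iff_of_pos_right he0).mp h1.1, ?_⟩
    have := h1.2
    rcases mul_eq_zero.mp ((add_zero _).symm.trans (by linarith : c.im * e + 0 = 0)) with h | h
    · exact h.symm
    · exact absurd h he0.ne'
  obtain ⟨γ, hγ⟩ : ∃ γ : ℝ, c = γ := ⟨c.re, by
    apply Complex.ext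
    · simp
    · simpa using (Complex.pos_iff.mp hcpos).2.symm⟩
  have hγ0 : 0 < γ := by rw [hγ] at hcpos; exact_mod_cast hcpos
  have hs : (((Real.sqrt γ)⁻¹ : ℝ) : ℂ) * (((Real.sqrt γ)⁻¹ : ℝ) : ℂ) * c = 1 := by
    rw [hγ]
    have : (Real.sqrt γ)⁻¹ * (Real.sqrt γ)⁻¹ * γ = 1 := by
      rw [← mul_inv, Real.mul_self_sqrt hγ0.le, inv_mul_cancel₀ hγ0.ne']
    exact_mod_cast this
  refine ⟨(((Real.sqrt γ)⁻¹ : ℝ) : ℂ) • v, N.smul_mem hvN _, ?_, ?_⟩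
  · rw [conjTranspose_smul, Matrix.smul_mul, Matrix.mul_smul, smul_smul, hc', smul_smul,
      Complex.star_def, Complex.conj_ofReal, hs, one_smul]
  · rw [conjTranspose_smul, Matrix.smul_mul, Matrix.mul_smul, smul_smul, hd', hcd, smul_smul,
      Complex.star_def, Complex.conj_ofReal, hs, one_smul]

/-- A projection is `E Eᴴ` for an isometry `E`, whose columns are the eigenvectors with
eigenvalue `1`. -/
theorem exists_isometry {p : Matrix n n ℂ} (hpp : p * p = p) (hph : pᴴ = p) :
    ∃ (d : ℕ) (E : Matrix n (Fin d) ℂ), Eᴴ * E = 1 ∧ E * Eᴴ = p := by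
  classical
  obtain ⟨hsp, hU, hU'⟩ := spectral_form (M := p) hph
  set U := ((show p.IsHermitian from hph).eigenvectorUnitary : Matrix n n ℂ)
  set f := (show p.IsHermitian from hph).eigenvalues
  have hf : ∀ i, f i = 0 ∨ f i = 1 := by
    intro i
    have h1 : Uᴴ * (p * p) * U = Uᴴ * p * U := by rw [hpp]
    have c : ∀ g : n → ℝ, Uᴴ * spec U g * U = diagonal (fun i => (g i : ℂ)) := by
      intro g
      calc Uᴴ * spec U g * U = (Uᴴ * U) * diagonal (fun i => (g i : ℂ)) * (Uᴴ * U) := by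
            simp only [spec, Matrix.mul_assoc]
        _ = _ := by rw [hU, Matrix.one_mul, Matrix.mul_one]
    rw [hsp, spec_mul hU, c, c] at h1
    have h2 := congrFun (congrFun h1 i) i
    rw [diagonal_apply_eq, diagonal_apply_eq] at h2
    have h3 : f i * f i = f i := by exact_mod_cast h2
    rcases eq_or_ne (f i) 0 with h | h
    · exact Or.inl h
    · exact Or.inr (mul_right_cancel₀ h (by rw [h3, one_mul]))
  let e := (Fintype.equivFin {i // f i = 1}).symm
  refine ⟨Fintype.card {i // f i = 1}, Matrix.of fun a k => U a (e k), ?_, ?_⟩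
  · ext k k'
    have := congrFun (congrFun hU (e k)) (e k')
    rw [mul_apply] at this ⊢
    simp only [conjTranspose_apply, of_apply] at this ⊢
    rw [this, one_apply, one_apply]
    simp [Subtype.coe_inj]
  · ext a b
    rw [hsp, spec, mul_apply, mul_apply]
    simp only [conjTranspose_apply, of_apply, mul_diagonal]
    rw [Equiv.sum_comp e (fun i => U a i * star (U b i))]
    rw [← Finset.sum_subtype (Finset.univ.filter fun i => f i = 1) (by simp)
      (fun i => U a i * star (U b i)), Finset.sum_filter]
    refine Finset.sum_congr rfl fun i _ => ?_
    rcases hf i with h | h <;> simp [h]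

/-- Simultaneous block form of a star-closed commutant `N` and of its own commutant: in a suitable
orthonormal basis indexed by triples `(j, l, r)`, the elements of `N` are `⊕ⱼ 1 ⊗ yⱼ` and the
matrices commuting with `N` are `⊕ⱼ yⱼ ⊗ 1`. The index `j` runs over equivalence classes
of minimal projections, `r` over the members of a class, and `l` over an orthonormal basis of
the range of its representative. -/
theorem star_structure {S : Set (Matrix n n ℂ)}
    (hstar : ∀ x ∈ Subalgebra.centralizer ℂ S, xᴴ ∈ Subalgebra.centralizer ℂ S) :
    ∃ (J : Type) (_ : Fintype J) (_ : DecidableEq J) (l r : J → ℕ)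
      (U : Matrix ((j : J) × (Fin (l j) × Fin (r j))) n ℂ),
      U * Uᴴ = 1 ∧ Uᴴ * U = 1 ∧ (∀ j, 0 < l j) ∧ (∀ j, 0 < r j) ∧
      (∀ x ∈ Subalgebra.centralizer ℂ S, ∃ y : (j : J) → Matrix (Fin (r j)) (Fin (r j)) ℂ,
        U * x * Uᴴ = blockDiagonal' fun j => kronecker (1 : Matrix (Fin (l j)) (Fin (l j)) ℂ) (y j)) ∧
      (∀ x, (∀ z ∈ Subalgebra.centralizer ℂ S, x * z = z * x) →
        ∃ y : (j : J) → Matrix (Fin (l j)) (Fin (l j)) ℂ,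
        U * x * Uᴴ = blockDiagonal' fun j => kronecker (y j) (1 : Matrix (Fin (r j)) (Fin (r j)) ℂ)) := by
  classical
  obtain ⟨m, P, hP, hort, hsum, hmin⟩ := exists_minimal_family hstar
  set N := Subalgebra.centralizer ℂ S
  let st : Setoid (Fin m) :=
    { r := fun i k => ∃ x ∈ N, P i * x * P k ≠ 0
      iseqv :=
        { refl := fun i => ⟨1, N.one_mem, by
            rw [Matrix.mul_one, (hP i).2.1]; exact (hP i).2.2.2⟩
          symm := by
            rintro i k ⟨x, hx, hne⟩
            refine ⟨xᴴ, hstar x hx, fun h => hne ?_⟩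
            have := congrArg conjTranspose h
            simpa only [conjTranspose_mul, conjTranspose_conjTranspose, (hP _).2.2.1,
              conjTranspose_zero, Matrix.mul_assoc] using this
          trans := by
            rintro i j k ⟨x, hx, hne⟩ ⟨y, hy, hne'⟩
            obtain ⟨u, huN, hu1, hu2⟩ :=
              exists_partial_isometry hstar (hP i) (hP j) (hmin i) (hmin j) hx hne
            refine ⟨u * y, N.mul_mem huN hy, fun h => hne' ?_⟩
            calc P j * y * P k = uᴴ * (u * uᴴ) * u * y * P k := by
                  rw [← (hP j).2.1, ← hu1]; simp only [Matrix.mul_assoc]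
              _ = uᴴ * (P i * (u * y) * P k) := by rw [hu2]; simp only [Matrix.mul_assoc]
              _ = 0 := by rw [h, Matrix.mul_zero] } }
  let J := Quotient st
  have hu : ∀ i : Fin m, ∃ u ∈ N, uᴴ * u = P (Quotient.out (⟦i⟧ : J)) ∧ u * uᴴ = P i := by
    intro i
    obtain ⟨x, hx, hne⟩ : ∃ x ∈ N, P i * x * P (Quotient.out (⟦i⟧ : J)) ≠ 0 :=
      Setoid.symm (Quotient.mk_out i)
    exact exists_partial_isometry hstar (hP i) (hP _) (hmin i) (hmin _) hx hne
  choose u huN hu1 hu2 using hu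
  have hE : ∀ j : J, ∃ (d : ℕ) (E : Matrix n (Fin d) ℂ), Eᴴ * E = 1 ∧
      E * Eᴴ = P (Quotient.out j) := fun j => exists_isometry (hP _).2.1 (hP _).2.2.1
  choose l E hE1 hE2 using hE
  let r : J → ℕ := fun j => Fintype.card {i : Fin m // (⟦i⟧ : J) = j}
  let e : (j : J) → Fin (r j) ≃ {i : Fin m // (⟦i⟧ : J) = j} := fun j => (Fintype.equivFin _).symm
  let Z : Matrix n ((j : J) × (Fin (l j) × Fin (r j))) ℂ :=
    Matrix.of fun b k => (u (e k.1 k.2.2) * E k.1) b k.2.1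
  have hu1' : ∀ j (k : Fin (r j)), (u (e j k))ᴴ * u (e j k) = P (Quotient.out j) := by
    intro j k
    rw [hu1, (e j k).2]
  have huP : ∀ i, P i * u i = u i := by
    intro i
    have h1 : (P i * u i - u i) * (u i)ᴴ = 0 := by
      rw [Matrix.sub_mul, Matrix.mul_assoc, hu2, (hP i).2.1, sub_self]
    have h2 : (P i * u i - u i) * (P i * u i - u i)ᴴ = 0 := by
      rw [conjTranspose_sub, conjTranspose_mul, Matrix.mul_sub, ← Matrix.mul_assoc, h1,
        Matrix.zero_mul, sub_zero]
    exact sub_eq_zero.mp (self_mul_conjTranspose_eq_zero.mp h2)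
  have huP' : ∀ i, (u i)ᴴ * P i = (u i)ᴴ := by
    intro i
    have := congrArg conjTranspose (huP i)
    rwa [conjTranspose_mul, (hP i).2.2.1] at this
  have hort' : ∀ i k, i ≠ k → (u i)ᴴ * u k = 0 := by
    intro i k hik
    rw [← huP' i, ← huP k, Matrix.mul_assoc, ← Matrix.mul_assoc (P i), hort i k hik,
      Matrix.zero_mul, Matrix.mul_zero]
  have entry : ∀ (x : Matrix n n ℂ) (k k' : (j : J) × (Fin (l j) × Fin (r j))),
      (Zᴴ * x * Z) k k' = ((E k.1)ᴴ * ((u (e k.1 k.2.2))ᴴ * x * u (e k'.1 k'.2.2)) * E k'.1)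
        k.2.1 k'.2.1 := by
    intro x k k'
    have : (E k.1)ᴴ * ((u (e k.1 k.2.2))ᴴ * x * u (e k'.1 k'.2.2)) * E k'.1 =
        (u (e k.1 k.2.2) * E k.1)ᴴ * x * (u (e k'.1 k'.2.2) * E k'.1) := by
      simp only [conjTranspose_mul, Matrix.mul_assoc]
    rw [this, mul_apply, mul_apply]
    refine Finset.sum_congr rfl fun b _ => ?_
    congr 1
  have hcomm : ∀ x, (∀ z ∈ N, x * z = z * x) → Zᴴ * x * Z = blockDiagonal' fun j =>
      kronecker ((E j)ᴴ * x * E j) (1 : Matrix (Fin (r j)) (Fin (r j)) ℂ) := by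
    intro x hx
    ext ⟨j, a, k⟩ ⟨j', a', k'⟩
    rw [entry]
    have h1 : ∀ i i', (u i)ᴴ * x * u i' = x * ((u i)ᴴ * u i') := fun i i' => by
      rw [← hx _ (hstar _ (huN i)), Matrix.mul_assoc]
    simp only [h1]
    by_cases hj : j = j'
    · subst hj
      rw [blockDiagonal'_apply_eq, kronecker, kroneckerMap_apply]
      by_cases hk : k = k'
      · subst hk
        rw [hu1', one_apply_eq, mul_one, ← hE2]
        simp only [Matrix.mul_assoc, hE1, Matrix.mul_one]
      · have : ((e j k : {i : Fin m // (⟦i⟧ : J) = j}) : Fin m) ≠ e j k' := fun h =>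
          hk ((e j).injective (Subtype.ext h))
        rw [hort' _ _ this, one_apply_ne hk]
        simp
    · have : ((e j k : {i : Fin m // (⟦i⟧ : J) = j}) : Fin m) ≠ e j' k' := fun h =>
          hj (by rw [← (e j k).2, ← (e j' k').2, h])
      rw [hort' _ _ this, blockDiagonal'_apply_ne _ _ _ hj]
      simp
  refine ⟨J, inferInstance, inferInstance, l, r, Zᴴ, ?_, ?_, ?_, ?_, ?_, ?_⟩
  · have := hcomm 1 (fun z _ => by simp)
    rw [Matrix.mul_one] at this
    rw [conjTranspose_conjTranspose, this]
    simp only [Matrix.mul_one, hE1]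
    have : (fun j : J => kronecker (1 : Matrix (Fin (l j)) (Fin (l j)) ℂ)
        (1 : Matrix (Fin (r j)) (Fin (r j)) ℂ)) = 1 := by
      funext j
      exact one_kronecker_one
    rw [this, blockDiagonal'_one]
  · rw [conjTranspose_conjTranspose]
    have h1 : Z * Zᴴ = ∑ j : J, ∑ k : Fin (r j), P (e j k) := by
      ext b b'
      rw [mul_apply, Fintype.sum_sigma, Matrix.sum_apply]
      refine Finset.sum_congr rfl fun j _ => ?_
      rw [Fintype.sum_prod_type_right, Matrix.sum_apply]
      refine Finset.sum_congr rfl fun k _ => ?_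
      have : P (e j k) = (u (e j k) * E j) * (u (e j k) * E j)ᴴ := by
        calc P (e j k) = u (e j k) * ((u (e j k))ᴴ * u (e j k)) * (u (e j k))ᴴ := by
              rw [← (hP _).2.1, ← hu2]; simp only [Matrix.mul_assoc]
          _ = _ := by
              rw [hu1', ← hE2]; simp only [conjTranspose_mul, Matrix.mul_assoc]
      rw [this, mul_apply]
      rfl
    rw [h1, ← hsum]
    have h2 : ∀ j : J, ∑ k : Fin (r j), P (e j k) = ∑ i : {i : Fin m // (⟦i⟧ : J) = j}, P i :=
      fun j => Equiv.sum_comp (e j) (fun i => P i)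
    simp only [h2]
    rw [← Fintype.sum_sigma', ← Equiv.sum_comp (Equiv.sigmaFiberEquiv fun i : Fin m => (⟦i⟧ : J))]
    rfl
  · intro j
    by_contra h0
    have h0 : l j = 0 := by omega
    apply (hP (Quotient.out j)).2.2.2
    rw [← hE2]
    ext a b
    rw [mul_apply]
    refine Finset.sum_eq_zero fun k _ => ?_
    exact absurd k.2 (by omega)
  · intro j
    exact Fintype.card_pos_iff.mpr ⟨⟨Quotient.out j, Quotient.out_eq j⟩⟩
  · intro x hx
    have hc : ∀ (j : J) (k k' : Fin (r j)), ∃ c : ℂ,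
        (u (e j k))ᴴ * x * u (e j k') = c • P (Quotient.out j) := by
      intro j k k'
      obtain ⟨c, hc⟩ := hmin (Quotient.out j) ((u (e j k))ᴴ * x * u (e j k'))
        (N.mul_mem (N.mul_mem (hstar _ (huN _)) hx) (huN _))
      refine ⟨c, ?_⟩
      rw [← hc]
      have g1 : u (e j k') * P (Quotient.out j) = u (e j k') := by
        rw [← hu1' j k', ← Matrix.mul_assoc, hu2, huP]
      have g2 : P (Quotient.out j) * (u (e j k))ᴴ = (u (e j k))ᴴ := by
        rw [← hu1' j k, Matrix.mul_assoc, hu2, huP']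
      calc (u (e j k))ᴴ * x * u (e j k') =
          (P (Quotient.out j) * (u (e j k))ᴴ) * x * (u (e j k') * P (Quotient.out j)) := by
            rw [g1, g2]
        _ = _ := by simp only [Matrix.mul_assoc]
    choose c hc using hc
    refine ⟨fun j => Matrix.of fun k k' => c j k k', ?_⟩
    rw [conjTranspose_conjTranspose]
    ext ⟨j, a, k⟩ ⟨j', a', k'⟩
    rw [entry]
    by_cases hj : j = j'
    · subst hj
      rw [blockDiagonal'_apply_eq, kronecker, kroneckerMap_apply]
      simp only [hc]
      have : (E j)ᴴ * P (Quotient.out j) * E j = 1 := by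
        rw [← hE2, ← Matrix.mul_assoc, hE1, Matrix.one_mul, hE1]
      rw [Matrix.mul_smul, Matrix.smul_mul, this, Matrix.smul_apply, of_apply, smul_eq_mul, mul_comm]
    · rw [blockDiagonal'_apply_ne _ _ _ hj]
      have h0 : P (e j k) * x * P (e j' k') = 0 := by
        by_contra hne
        apply hj
        rw [← (e j k).2, ← (e j' k').2]
        exact Quotient.sound ⟨x, hx, hne⟩
      have : (u (e j k))ᴴ * x * u (e j' k') = 0 := by
        rw [← huP', ← huP (e j' k')]
        calc (u (e j k))ᴴ * P (e j k) * x * (P (e j' k') * u (e j' k')) =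
            (u (e j k))ᴴ * (P (e j k) * x * P (e j' k')) * u (e j' k') := by
              simp only [Matrix.mul_assoc]
          _ = 0 := by rw [h0, Matrix.mul_zero, Matrix.zero_mul]
      simp only [this]
      simp
  · intro x hx
    exact ⟨_, by rw [conjTranspose_conjTranspose]; exact hcomm x hx⟩

end Structure

/-! ### Petz recovery -/

section Petz

/-- Equality in the data processing inequality makes the Petz map recover the state:
`ρ = σ^{1/2} Φ(σ'^{-1/2} ρ' σ'^{-1/2}) σ^{1/2}`. The identity of `dpi_equality` says that
`R = Φ(ρ'^{1/2} σ'^{-1/2}) σ^{1/2}` agrees with `ρ^{1/2}` on the support of `ρ`; comparing the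
Hilbert–Schmidt norms, `R` vanishes off that support. -/
theorem petz_recovery {n m : Type*} [Fintype n] [DecidableEq n] [Fintype m] [DecidableEq m]
    (Φ : Matrix m m ℂ →⋆ₐ[ℂ] Matrix n n ℂ)
    {W U : Matrix n n ℂ} (hW : Wᴴ * W = 1) (hW' : W * Wᴴ = 1) (hU : Uᴴ * U = 1) (hU' : U * Uᴴ = 1)
    {V T : Matrix m m ℂ} (hV : Vᴴ * V = 1) (hV' : V * Vᴴ = 1) (hT : Tᴴ * T = 1) (hT' : T * Tᴴ = 1)
    {s r : n → ℝ} (hs : ∀ i, 0 ≤ s i) (hr : ∀ i, 0 ≤ r i)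
    {s' r' : m → ℝ} (hs' : ∀ i, 0 ≤ s' i) (hr' : ∀ i, 0 ≤ r' i)
    (hΦρ : ∀ X, (Φ X * spec U r).trace = (X * spec T r').trace)
    (hΦσ : ∀ X, (Φ X * spec W s).trace = (X * spec V s').trace)
    (hsup : ∀ k i, s k = 0 → Complex.normSq ((Wᴴ * U) k i) * r i = 0)
    (hsup' : ∀ k i, s' k = 0 → Complex.normSq ((Vᴴ * T) k i) * r' i = 0)
    (heq : ∑ k, ∑ i, Complex.normSq ((Wᴴ * U) k i) * r i * Real.log (s k / r i) =
      ∑ k, ∑ i, Complex.normSq ((Vᴴ * T) k i) * r' i * Real.log (s' k / r' i)) :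
    spec U r = spec W (fun k => Real.sqrt (s k)) *
      Φ (spec V (fun k => (Real.sqrt (s' k))⁻¹) * spec T r' *
        spec V (fun k => (Real.sqrt (s' k))⁻¹)) * spec W (fun k => Real.sqrt (s k)) := by
  have hdpi := dpi_equality Φ hW hW' hU hU' hV hV' hT hs hr hs' hr' hΦρ hΦσ hsup hsup' heq
  have inv_supp : ∀ x : ℝ, 0 ≤ x → (√x)⁻¹ * √x = if x = 0 then 0 else 1 := by
    intro x hx
    split_ifs with h
    · simp [h]
    · exact inv_mul_cancel₀ (Real.sqrt_ne_zero'.mpr (lt_of_le_of_ne hx (Ne.symm h)))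
  set a := spec W (fun k => √(s k)) with ha
  set ri := spec U (fun i => (√(r i))⁻¹) with hri
  set P := spec U (fun i => if r i = 0 then (0 : ℝ) else 1) with hP
  set b := spec V (fun k => √(s' k)) with hb
  set bi := spec V (fun k => (√(s' k))⁻¹) with hbi
  set ci := spec T (fun i => (√(r' i))⁻¹) with hci
  set c := spec T (fun i => √(r' i)) with hc
  set w := spec U (fun i => √(r i)) with hw
  have haa : a * a = spec W s := by
    rw [ha, spec_mul hW]; congr 1; ext k; exact Real.mul_self_sqrt (hs k)
  have hww : w * w = spec U r := by
    rw [hw, spec_mul hU]; congr 1; ext k; exact Real.mul_self_sqrt (hr k)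
  have hbb : b * b = spec V s' := by
    rw [hb, spec_mul hV]; congr 1; ext k; exact Real.mul_self_sqrt (hs' k)
  have hcc : c * c = spec T r' := by
    rw [hc, spec_mul hT]; congr 1; ext k; exact Real.mul_self_sqrt (hr' k)
  have aH : aᴴ = a := spec_conjTranspose _ _
  have wH : wᴴ = w := spec_conjTranspose _ _
  have bH : bᴴ = b := spec_conjTranspose _ _
  have biH : biᴴ = bi := spec_conjTranspose _ _
  have cH : cᴴ = c := spec_conjTranspose _ _
  have PH : Pᴴ = P := spec_conjTranspose _ _
  have hriw : ri * w = P := by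
    rw [hri, hw, hP, spec_mul hU]; congr 1; ext k; exact inv_supp _ (hr k)
  have hPw : P * w = w := by
    rw [hw, hP, spec_mul hU]; congr 1; ext k
    split_ifs with h <;> simp [h]
  have hwP : w * P = w := by
    have := congrArg conjTranspose hPw
    rwa [conjTranspose_mul, wH, PH] at this
  have hPP : P * P = P := by
    rw [hP, spec_mul hU]; congr 1; ext k; split_ifs <;> simp
  have hbib : b * bi = bi * b := by
    rw [hb, hbi, spec_mul hV, spec_mul hV]; congr 1; ext k; exact mul_comm _ _
  -- the support of `ρ'` lies in that of `σ'`
  have hQc : bi * b * c = c := by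
    have h1 : bi * b = spec V (fun k => if s' k = 0 then (0 : ℝ) else 1) := by
      rw [hb, hbi, spec_mul hV]; congr 1; ext k; exact inv_supp _ (hs' k)
    have h2 : spec V (fun k => 1 - if s' k = 0 then (0 : ℝ) else 1) * c = 0 := by
      have h3 : diagonal (fun k => ((1 - if s' k = 0 then (0 : ℝ) else 1 : ℝ) : ℂ)) * (Vᴴ * T) *
          diagonal (fun i => ((√(r' i) : ℝ) : ℂ)) = 0 := by
        ext k i
        rw [mul_diagonal, diagonal_mul]
        by_cases hk : s' k = 0
        · rcases mul_eq_zero.mp (hsup' k i hk) with h | h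
          · rw [Complex.normSq_eq_zero.mp h]; simp
          · simp [h]
        · simp [hk]
      calc _ = V * (diagonal (fun k => ((1 - if s' k = 0 then (0 : ℝ) else 1 : ℝ) : ℂ)) *
          (Vᴴ * T) * diagonal (fun i => ((√(r' i) : ℝ) : ℂ))) * Tᴴ := by
            simp only [hc, spec, Matrix.mul_assoc]
        _ = 0 := by rw [h3, Matrix.mul_zero, Matrix.zero_mul]
    rw [← spec_sub, spec_one hV', ← h1, Matrix.sub_mul, Matrix.one_mul] at h2
    exact (sub_eq_zero.mp h2).symm
  have hcQ : c * (b * bi) = c := by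
    have := congrArg conjTranspose hQc
    rwa [conjTranspose_mul, conjTranspose_mul, biH, bH, cH] at this
  -- the support of `ρ` lies in `Φ` of that of `ρ'`
  have hcw : Φ (c * ci) * w = w := by
    set q := spec T (fun i => if r' i = 0 then (1 : ℝ) else 0) with hq
    have hqq : q * q = q := by
      rw [hq, spec_mul hT]; congr 1; ext k; split_ifs <;> simp
    have hqH : qᴴ = q := spec_conjTranspose _ _
    have h1 : c * ci = 1 - q := by
      rw [← spec_one hT', hq, spec_sub, hc, hci, spec_mul hT]
      congr 1; ext k
      rw [mul_comm, inv_supp _ (hr' k)]; split_ifs <;> simp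
    have hΦH : (Φ q)ᴴ = Φ q := by
      have := map_star Φ q
      rw [star_eq_conjTranspose, star_eq_conjTranspose, hqH] at this
      exact this.symm
    have h2 : Φ q * w = 0 := by
      apply trace_conjTranspose_mul_self_eq_zero_iff.mp
      calc ((Φ q * w)ᴴ * (Φ q * w)).trace = (w * (Φ (q * q) * w)).trace := by
            rw [conjTranspose_mul, wH, hΦH, map_mul]; simp only [Matrix.mul_assoc]
        _ = (Φ q * spec U r).trace := by
            rw [hqq, trace_mul_comm, Matrix.mul_assoc, hww]
        _ = 0 := by
            rw [hΦρ, hq, spec_mul hT]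
            have : spec T (fun i => (if r' i = 0 then (1 : ℝ) else 0) * r' i) = 0 := by
              have h0 : (fun i => (if r' i = 0 then (1 : ℝ) else 0) * r' i) = fun _ => 0 := by
                ext i; split_ifs with h <;> simp [h]
              rw [h0]; simp [spec]
            rw [this, trace_zero]
    rw [h1, map_sub, map_one, Matrix.sub_mul, h2, Matrix.one_mul, sub_zero]
  set R := Φ (c * bi) * a with hR
  have hRP : R * P = w := by
    have h1 : a * P = Φ (b * ci) * w := by
      rw [← hriw, ← Matrix.mul_assoc, hdpi, Matrix.mul_assoc, hPw]
    calc R * P = Φ (c * bi) * (a * P) := by rw [hR, Matrix.mul_assoc]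
      _ = Φ (c * (b * bi) * ci) * w := by
          rw [h1, ← Matrix.mul_assoc, ← map_mul, hbib]; simp only [Matrix.mul_assoc]
      _ = w := by rw [hcQ, hcw]
  have hRR : Rᴴ * R = a * Φ (bi * (c * c) * bi) * a := by
    have : (Φ (c * bi))ᴴ = Φ (bi * c) := by
      have := map_star Φ (c * bi)
      rw [star_eq_conjTranspose, star_eq_conjTranspose, conjTranspose_mul, cH, biH] at this
      exact this.symm
    rw [hR, conjTranspose_mul, aH, this]
    simp only [map_mul, Matrix.mul_assoc]
  have htr : (Rᴴ * R).trace = (w * w).trace := by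
    rw [hRR, trace_mul_comm, ← Matrix.mul_assoc, haa, trace_mul_comm, hΦσ, ← hbb]
    have h1 : (bi * (c * c) * bi * (b * b)).trace = (c * (b * bi) * (bi * b * c)).trace := by
      rw [show bi * (c * c) * bi * (b * b) = (bi * c) * (c * (bi * b) * b) by
        simp only [Matrix.mul_assoc], trace_mul_comm, ← hbib, hcQ,
        show c * b * (bi * c) = c * (b * bi) * c by simp only [Matrix.mul_assoc],
        Matrix.mul_assoc c]
    rw [h1, hcQ, hQc, hcc, hww]
    have := hΦρ 1
    rw [map_one, Matrix.one_mul, Matrix.one_mul] at this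
    exact this.symm
  have hR0 : R * (1 - P) = 0 := by
    apply trace_conjTranspose_mul_self_eq_zero_iff.mp
    have h1 : (1 - P) * (1 - P) = 1 - P := by
      rw [Matrix.mul_sub, Matrix.mul_one, Matrix.sub_mul, Matrix.one_mul, hPP]; simp
    have h2 : (1 - P)ᴴ = 1 - P := by rw [conjTranspose_sub, conjTranspose_one, PH]
    calc ((R * (1 - P))ᴴ * (R * (1 - P))).trace = ((1 - P) * (Rᴴ * R * (1 - P))).trace := by
          rw [conjTranspose_mul, h2]; simp only [Matrix.mul_assoc]
      _ = (Rᴴ * R * (1 - P)).trace := by rw [trace_mul_comm, Matrix.mul_assoc, h1]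
      _ = (Rᴴ * R).trace - (Rᴴ * R * (P * P)).trace := by
          rw [Matrix.mul_sub, Matrix.mul_one, trace_sub, hPP]
      _ = (Rᴴ * R).trace - ((R * P)ᴴ * (R * P)).trace := by
          rw [conjTranspose_mul R P, PH, Matrix.mul_assoc P, trace_mul_comm P]
          simp only [Matrix.mul_assoc]
      _ = 0 := by rw [hRP, wH, htr, sub_self]
  have hRw : R = w := by
    rw [Matrix.mul_sub, Matrix.mul_one, hRP] at hR0
    exact sub_eq_zero.mp hR0
  rw [← hcc, ← hRR, hRw, wH, hww]

end Petz

/-! ### Partial traces and ampliations -/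

section PartialTrace

variable {X Y Z : Type*} [Fintype X] [DecidableEq X] [Fintype Y] [DecidableEq Y]
  [Fintype Z] [DecidableEq Z]

/-- The ampliation `M ↦ M ⊗ 1` on a space `Y` identified with `X ⊗ Z` along `e`. -/
def amp (e : Y ≃ X × Z) : Matrix X X ℂ →⋆ₐ[ℂ] Matrix Y Y ℂ where
  toFun M := (kronecker M (1 : Matrix Z Z ℂ)).submatrix e e
  map_one' := by
    rw [kronecker, one_kronecker_one, submatrix_one_equiv]
  map_mul' M N := by
    rw [submatrix_mul_equiv]
    unfold kronecker
    rw [← mul_kronecker_mul, Matrix.one_mul]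
  map_zero' := by
    ext i j; simp [kronecker]
  map_add' M N := by
    ext i j; simp [kronecker, add_mul]
  commutes' c := by
    rw [Algebra.algebraMap_eq_smul_one, Algebra.algebraMap_eq_smul_one, kronecker, smul_kronecker,
      one_kronecker_one, submatrix_smul]
    exact congrArg (fun M : Matrix Y Y ℂ => c • M) (submatrix_one_equiv e)
  map_star' M := by
    rw [star_eq_conjTranspose, star_eq_conjTranspose, conjTranspose_submatrix]
    unfold kronecker
    rw [conjTranspose_kronecker, conjTranspose_one]

theorem amp_apply (e : Y ≃ X × Z) (M : Matrix X X ℂ) (y y' : Y) :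
    amp e M y y' = M (e y).1 (e y').1 * (1 : Matrix Z Z ℂ) (e y).2 (e y').2 := rfl

/-- The partial trace over `Z` on a space `Y` identified with `X ⊗ Z` along `e`. -/
def ptr (e : Y ≃ X × Z) (ρ : Matrix Y Y ℂ) : Matrix X X ℂ :=
  Matrix.of fun x x' => ∑ z, ρ (e.symm (x, z)) (e.symm (x', z))

theorem ptr_apply (e : Y ≃ X × Z) (ρ : Matrix Y Y ℂ) (x x' : X) :
    ptr e ρ x x' = ∑ z, ρ (e.symm (x, z)) (e.symm (x', z)) := rfl

theorem ptr_posSemidef (e : Y ≃ X × Z) {ρ : Matrix Y Y ℂ} (hρ : ρ.PosSemidef) :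
    (ptr e ρ).PosSemidef := by
  have : ptr e ρ = ∑ z, ρ.submatrix (fun x => e.symm (x, z)) (fun x => e.symm (x, z)) := by
    ext x x'
    rw [Matrix.sum_apply]; rfl
  rw [this]
  exact posSemidef_sum _ fun z _ => hρ.submatrix _

theorem ptr_trace (e : Y ≃ X × Z) (ρ : Matrix Y Y ℂ) : (ptr e ρ).trace = ρ.trace := by
  rw [trace, trace, ← Equiv.sum_comp e.symm, Fintype.sum_prod_type]
  rfl

theorem ptr_amp_mul (e : Y ≃ X × Z) (M : Matrix X X ℂ) (ρ : Matrix Y Y ℂ) :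
    ptr e (amp e M * ρ) = M * ptr e ρ := by
  ext x x'
  rw [ptr_apply, mul_apply]
  simp only [ptr_apply, Finset.mul_sum]
  rw [Finset.sum_comm]
  refine Finset.sum_congr rfl fun z _ => ?_
  rw [mul_apply, ← Equiv.sum_comp e.symm, Fintype.sum_prod_type]
  refine Finset.sum_congr rfl fun x₂ _ => ?_
  simp [amp_apply, one_apply]

theorem ptr_mul_amp (e : Y ≃ X × Z) (M : Matrix X X ℂ) (ρ : Matrix Y Y ℂ) :
    ptr e (ρ * amp e M) = ptr e ρ * M := by
  ext x x'
  rw [ptr_apply, mul_apply]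
  simp only [ptr_apply, Finset.sum_mul]
  rw [Finset.sum_comm]
  refine Finset.sum_congr rfl fun z _ => ?_
  rw [mul_apply, ← Equiv.sum_comp e.symm, Fintype.sum_prod_type]
  refine Finset.sum_congr rfl fun x₂ _ => ?_
  simp [amp_apply, one_apply]

theorem amp_trace (e : Y ≃ X × Z) (M : Matrix X X ℂ) (ρ : Matrix Y Y ℂ) :
    (amp e M * ρ).trace = (M * ptr e ρ).trace := by
  rw [← ptr_amp_mul, ptr_trace]

theorem amp_conjTranspose (e : Y ≃ X × Z) (M : Matrix X X ℂ) : (amp e M)ᴴ = amp e Mᴴ :=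
  (map_star (amp e) M).symm

theorem amp_unitary (e : Y ≃ X × Z) {W : Matrix X X ℂ} (hW : Wᴴ * W = 1) :
    (amp e W)ᴴ * amp e W = 1 := by
  rw [amp_conjTranspose, ← map_mul, hW, map_one]

theorem amp_unitary' (e : Y ≃ X × Z) {W : Matrix X X ℂ} (hW : W * Wᴴ = 1) :
    amp e W * (amp e W)ᴴ = 1 := by
  rw [amp_conjTranspose, ← map_mul, hW, map_one]

theorem amp_spec (e : Y ≃ X × Z) (W : Matrix X X ℂ) (f : X → ℝ) :
    amp e (spec W f) = spec (amp e W) (fun y => f (e y).1) := by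
  have : amp e (diagonal fun i => (f i : ℂ)) = diagonal fun y => (f (e y).1 : ℂ) := by
    ext y y'
    rw [amp_apply, diagonal_apply, diagonal_apply, one_apply]
    by_cases h : y = y'
    · subst h; simp
    · rw [if_neg h]
      by_cases h1 : (e y).1 = (e y').1
      · have : (e y).2 ≠ (e y').2 := fun h2 => h (e.injective (Prod.ext h1 h2))
        simp [this]
      · simp [h1]
  rw [spec, spec, map_mul, map_mul, this, amp_conjTranspose]

/-- The marginal `ρ_X ⊗ 1`, with eigenvalues `s` and eigenbasis `amp e W`: the support condition,
and the relative entropy `-D(ρ ‖ ρ_X ⊗ 1)` as a difference of entropies. -/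
theorem marginal_weights (e : Y ≃ X × Z) {W : Matrix X X ℂ} {U : Matrix Y Y ℂ}
    (hW : Wᴴ * W = 1) (hW' : W * Wᴴ = 1) (hU : Uᴴ * U = 1) {s : X → ℝ} {r : Y → ℝ}
    (hr : ∀ i, 0 ≤ r i) (h : ptr e (spec U r) = spec W s) :
    (∀ k i, s (e k).1 = 0 → Complex.normSq (((amp e W)ᴴ * U) k i) * r i = 0) ∧
    ∑ k, ∑ i, Complex.normSq (((amp e W)ᴴ * U) k i) * r i * Real.log (s (e k).1 / r i) =
      ∑ x, s x * Real.log (s x) - ∑ i, r i * Real.log (r i) := by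
  have hd : ∀ x, ∑ z, (((amp e W)ᴴ * spec U r * amp e W) (e.symm (x, z)) (e.symm (x, z))).re
      = s x := by
    intro x
    have h1 : ptr e ((amp e W)ᴴ * spec U r * amp e W) = diagonal fun i => (s i : ℂ) := by
      rw [ptr_mul_amp, amp_conjTranspose, ptr_amp_mul, h, spec]
      calc _ = (Wᴴ * W) * (diagonal fun i => (s i : ℂ)) * (Wᴴ * W) := by
            simp only [Matrix.mul_assoc]
        _ = _ := by rw [hW, Matrix.one_mul, Matrix.mul_one]
    have h2 := congrArg Complex.re (congrFun (congrFun h1 x) x)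
    rw [ptr_apply, Complex.re_sum, diagonal_apply_eq] at h2
    exact h2
  have hsup : ∀ k i, s (e k).1 = 0 → Complex.normSq (((amp e W)ᴴ * U) k i) * r i = 0 := by
    intro k i hk
    have nn : ∀ k i, 0 ≤ Complex.normSq (((amp e W)ᴴ * U) k i) * r i :=
      fun k i => mul_nonneg (Complex.normSq_nonneg _) (hr i)
    have h1 := hd (e k).1
    rw [hk] at h1
    simp only [← weight_sum] at h1
    have h2 := (Finset.sum_eq_zero_iff_of_nonneg
      (fun z _ => Finset.sum_nonneg fun i _ => nn _ i)).mp h1 (e k).2 (Finset.mem_univ _)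
    have h3 := (Finset.sum_eq_zero_iff_of_nonneg (fun i _ => nn _ i)).mp h2 i (Finset.mem_univ _)
    simpa using h3
  refine ⟨hsup, ?_⟩
  rw [log_weights (amp_unitary' e hW') hU (fun k => s (e k).1) r hsup]
  congr 1
  rw [← Equiv.sum_comp e.symm, Fintype.sum_prod_type]
  refine Finset.sum_congr rfl fun x _ => ?_
  simp only [Equiv.apply_symm_apply]
  rw [← Finset.sum_mul, hd]

end PartialTrace

/-! ### The recovery formula for saturating states -/

section Markov

theorem entropy_eq {n : Type*} [Fintype n] [DecidableEq n] {M : Matrix n n ℂ}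
    (hM : M.IsHermitian) :
    vNEntropy M * Real.log 2 = -∑ i, hM.eigenvalues i * Real.log (hM.eigenvalues i) := by
  have h2 : Real.log 2 ≠ 0 := (Real.log_pos (by norm_num)).ne'
  rw [vNEntropy, dif_pos hM, neg_mul, Finset.sum_mul]
  congr 1
  refine Finset.sum_congr rfl fun i _ => ?_
  rw [Real.logb]
  field_simp

variable {A B C : Type*} [Fintype A] [DecidableEq A] [Fintype B] [DecidableEq B]
  [Fintype C] [DecidableEq C]

/-- A state saturating strong subadditivity is recovered from `ρ_BC` by
`ρ = ρ_AB^{1/2} ρ_B^{-1/2} ρ_BC ρ_B^{-1/2} ρ_AB^{1/2}`. -/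
theorem markov_identity {ρ : Matrix (A × B × C) (A × B × C) ℂ} (hρ : ρ.PosSemidef)
    (hsat : S3AB ρ + S3BC ρ = S3ABC ρ + S3B ρ) :
    ∃ (W : Matrix (A × B) (A × B) ℂ) (s : A × B → ℝ) (V : Matrix B B ℂ) (t : B → ℝ),
      Wᴴ * W = 1 ∧ Vᴴ * V = 1 ∧ V * Vᴴ = 1 ∧ (∀ i, 0 ≤ s i) ∧ (∀ i, 0 ≤ t i) ∧
      ptr (Equiv.prodAssoc A B C).symm ρ = spec W s ∧
      ptr (Equiv.refl (B × C)) (ptr (Equiv.prodComm A (B × C)) ρ) = spec V t ∧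
      ρ = amp (Equiv.prodAssoc A B C).symm (spec W (fun k => √(s k))) *
        amp (Equiv.prodComm A (B × C)) (amp (Equiv.refl (B × C)) (spec V (fun k => (√(t k))⁻¹)) *
          ptr (Equiv.prodComm A (B × C)) ρ *
          amp (Equiv.refl (B × C)) (spec V (fun k => (√(t k))⁻¹))) *
        amp (Equiv.prodAssoc A B C).symm (spec W (fun k => √(s k))) := by
  set e1 := (Equiv.prodAssoc A B C).symm with he1
  set e2 := Equiv.prodComm A (B × C) with he2
  set e3 := Equiv.refl (B × C) with he3
  have pAB := ptr_posSemidef e1 hρ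
  have pBC := ptr_posSemidef e2 hρ
  have pB := ptr_posSemidef e3 pBC
  have S1 : S3AB ρ = vNEntropy (ptr e1 ρ) := rfl
  have S2 : S3BC ρ = vNEntropy (ptr e2 ρ) := rfl
  have S3 : S3B ρ = vNEntropy (ptr e3 (ptr e2 ρ)) := by
    rw [S3B]; congr 1; ext b b'
    exact Finset.sum_comm
  have S4 : S3ABC ρ = vNEntropy ρ := rfl
  have hsat' := congrArg (· * Real.log 2) hsat
  simp only [add_mul] at hsat'
  rw [S1, S2, S3, S4, entropy_eq pAB.1, entropy_eq pBC.1, entropy_eq pB.1, entropy_eq hρ.1]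
    at hsat'
  obtain ⟨f1, u1, u1'⟩ := spectral_form pAB.1
  obtain ⟨f2, u2, u2'⟩ := spectral_form pBC.1
  obtain ⟨f3, u3, u3'⟩ := spectral_form pB.1
  obtain ⟨f4, u4, u4'⟩ := spectral_form hρ.1
  obtain ⟨m1, m1'⟩ := marginal_weights e1 u1 u1' u4 hρ.eigenvalues_nonneg (by rw [← f4]; exact f1)
  obtain ⟨m2, m2'⟩ := marginal_weights e3 u3 u3' u2 pBC.eigenvalues_nonneg (by rw [← f2]; exact f3)
  have key := petz_recovery (amp e2) (amp_unitary e1 u1) (amp_unitary' e1 u1') u4 u4'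
    (amp_unitary e3 u3) (amp_unitary' e3 u3') u2 u2'
    (fun i => pAB.eigenvalues_nonneg (e1 i).1) hρ.eigenvalues_nonneg
    (fun i => pB.eigenvalues_nonneg (e3 i).1) pBC.eigenvalues_nonneg
    (by intro M; rw [← f4, ← f2, amp_trace])
    (by
      intro M
      rw [← amp_spec, ← amp_spec, ← f1, ← f3, amp_trace]
      congr 2
      ext ⟨b, c⟩ ⟨b', c'⟩
      simp only [ptr_apply, amp_apply, he1, he2, he3, Equiv.prodAssoc, Equiv.prodComm,
        Equiv.refl_symm, Equiv.coe_fn_mk, Equiv.symm_mk, Equiv.refl_apply, Finset.sum_mul]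
      rw [Finset.sum_comm]
      rfl)
    m1 m2 (by rw [m1', m2']; linarith)
  refine ⟨_, _, _, _, u1, u3, u3', pAB.eigenvalues_nonneg, pB.eigenvalues_nonneg, f1, f3, ?_⟩
  rw [amp_spec, amp_spec]
  rw [← f4, ← f2] at key
  exact key

end Markov

/-! ### Factorization over commuting algebras -/

section Factorization

variable {A B : Type*} [Fintype A] [Fintype B] [DecidableEq B]

/-- If `∑ aᵢ aᵢᴴ = V diag(t) Vᴴ`, then the range of each `aᵢ` lies in the support of `diag(t)`. -/
theorem supp_mul {ι : Type*} [Fintype ι] {a : ι → Matrix B B ℂ} {V : Matrix B B ℂ} {t : B → ℝ}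
    (hV : Vᴴ * V = 1) (hsum : ∑ i, a i * (a i)ᴴ = spec V t) (i : ι) :
    spec V (fun k => if t k = 0 then (1 : ℝ) else 0) * a i = 0 := by
  set q := spec V (fun k => if t k = 0 then (1 : ℝ) else 0) with hq
  have hqH : qᴴ = q := spec_conjTranspose _ _
  have h0 : q * spec V t = 0 := by
    rw [hq, spec_mul hV]
    have : (fun k => (if t k = 0 then (1 : ℝ) else 0) * t k) = fun _ => 0 := by
      ext k; split_ifs with h <;> simp [h]
    rw [this]; simp [spec]
  have h1 : ∑ i, (((a i)ᴴ * q)ᴴ * ((a i)ᴴ * q)).trace = 0 := by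
    have : ∀ i, ((a i)ᴴ * q)ᴴ * ((a i)ᴴ * q) = q * (a i * (a i)ᴴ) * q := by
      intro i
      rw [conjTranspose_mul, conjTranspose_conjTranspose, hqH]
      simp only [Matrix.mul_assoc]
    simp only [this]
    rw [← trace_sum, ← Finset.sum_mul, ← Finset.mul_sum, hsum, h0, Matrix.zero_mul, trace_zero]
  have h2 := congrArg conjTranspose (sum_trace_eq_zero h1 i)
  rwa [conjTranspose_mul, conjTranspose_conjTranspose, hqH, conjTranspose_zero] at h2

/-- The blocks `∑_β a_{αβ} (b⁻¹ R b⁻¹) a_{βα'}` of the recovered state factor as `X_{αα'} Y_R`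
with `Y_R` in a star-closed commutant `N` and `X_{αα'}` commuting with `N`, where `N` is the
fixed-point algebra of `y ↦ b⁻¹ (∑ a_{αβ} y a_{αβ}ᴴ) b⁻¹`. Off the support of `b`, the
projection onto the kernel is adjoined to the Kraus family and to `b`, so that `b` becomes
invertible. -/
theorem exists_factorization {a : A → A → Matrix B B ℂ} (haH : ∀ α β, (a α β)ᴴ = a β α)
    {V : Matrix B B ℂ} {t : B → ℝ} (hV : Vᴴ * V = 1) (hV' : V * Vᴴ = 1) (ht : ∀ i, 0 ≤ t i)
    (hsum : ∑ α, ∑ β, a α β * a β α = spec V t) {κ : Type*} {R : κ → Matrix B B ℂ}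
    (hR : ∀ k, ∑ α, ∑ β, a α β * (spec V (fun i => (√(t i))⁻¹) * R k *
      spec V (fun i => (√(t i))⁻¹)) * a β α = R k) :
    ∃ (S : Set (Matrix B B ℂ)) (X : A → A → Matrix B B ℂ) (Y : κ → Matrix B B ℂ),
      (∀ x ∈ Subalgebra.centralizer ℂ S, xᴴ ∈ Subalgebra.centralizer ℂ S) ∧
      (∀ k, Y k ∈ Subalgebra.centralizer ℂ S) ∧
      (∀ α α', ∀ z ∈ Subalgebra.centralizer ℂ S, X α α' * z = z * X α α') ∧
      ∀ α α' k, ∑ β, a α β * (spec V (fun i => (√(t i))⁻¹) * R k *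
        spec V (fun i => (√(t i))⁻¹)) * a β α' = X α α' * Y k := by
  set q := spec V (fun k => if t k = 0 then (1 : ℝ) else 0) with hq
  set p := spec V (fun k => if t k = 0 then (0 : ℝ) else 1) with hp
  set d := spec V (fun i => (√(t i))⁻¹) with hd
  set b := spec V (fun i => if t i = 0 then (1 : ℝ) else √(t i)) with hb
  set bi := spec V (fun i => if t i = 0 then (1 : ℝ) else (√(t i))⁻¹) with hbi
  have hqH : qᴴ = q := spec_conjTranspose _ _
  have hbH : bᴴ = b := spec_conjTranspose _ _
  have st : ∀ i, t i ≠ 0 → √(t i) ≠ 0 := fun i h =>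
    Real.sqrt_ne_zero'.mpr (lt_of_le_of_ne (ht i) (Ne.symm h))
  have hpq : p = 1 - q := by
    rw [← spec_one hV', hq, hp, spec_sub]; congr 1; ext i; split_ifs <;> simp
  have hbbi : b * bi = 1 := by
    rw [hb, hbi, spec_mul hV, ← spec_one hV']; congr 1; ext i
    split_ifs with h
    · simp
    · exact mul_inv_cancel₀ (st i h)
  have hqq : q * q = q := by
    rw [hq, spec_mul hV]; congr 1; ext k; split_ifs <;> simp
  have hbb : b * b = spec V t + q := by
    rw [← sub_eq_iff_eq_add, hb, hq, spec_mul hV, spec_sub]; congr 1; ext k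
    split_ifs with h
    · simp [h]
    · simp [Real.mul_self_sqrt (ht k)]
  have hqd : q * d = 0 := by
    rw [hq, hd, spec_mul hV]
    have : (fun k => (if t k = 0 then (1 : ℝ) else 0) * (√(t k))⁻¹) = fun _ => 0 := by
      ext k; split_ifs with h <;> simp [h]
    rw [this]; simp [spec]
  have hbd : b * d = p := by
    rw [hb, hd, hp, spec_mul hV]; congr 1; ext i
    split_ifs with h
    · simp [h]
    · exact mul_inv_cancel₀ (st i h)
  have hdb : d * b = p := by
    rw [hb, hd, hp, spec_mul hV]; congr 1; ext i
    split_ifs with h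
    · simp [h]
    · exact inv_mul_cancel₀ (st i h)
  have hqa : ∀ α β, q * a α β = 0 := by
    intro α β
    refine supp_mul (a := fun i : A × A => a i.1 i.2) hV ?_ (α, β)
    rw [Fintype.sum_prod_type, ← hsum]
    simp only [haH]
  have haq : ∀ α β, a α β * q = 0 := by
    intro α β
    have := congrArg conjTranspose (hqa β α)
    rwa [conjTranspose_mul, hqH, haH, conjTranspose_zero] at this
  have hpR : ∀ k, p * R k = R k := by
    intro k
    rw [hpq, Matrix.sub_mul, Matrix.one_mul, sub_eq_self]
    nth_rw 1 [← hR k]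
    simp only [Finset.mul_sum, ← Matrix.mul_assoc, hqa, Matrix.zero_mul, Finset.sum_const_zero]
  have hRp : ∀ k, R k * p = R k := by
    intro k
    rw [hpq, Matrix.mul_sub, Matrix.mul_one, sub_eq_self]
    nth_rw 1 [← hR k]
    simp only [Finset.sum_mul, Matrix.mul_assoc, haq, Matrix.mul_zero, Finset.sum_const_zero]
  let f : Option (A × A) → Matrix B B ℂ := fun i => i.elim q fun x => a x.1 x.2
  let τ : Option (A × A) ≃ Option (A × A) := Equiv.optionCongr (Equiv.prodComm A A)
  have hτ : ∀ i, f (τ i) = (f i)ᴴ := by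
    rintro (_ | ⟨α, β⟩)
    · exact hqH.symm
    · exact (haH α β).symm
  have hfsum : ∑ i, f i * (f i)ᴴ = b * b := by
    rw [Fintype.sum_option, Fintype.sum_prod_type, hbb, ← hsum, add_comm]
    congr 1
    · simp only [f, Option.elim_some, haH]
    · simp only [f, Option.elim_none, hqH, hqq]
  have hbpd : b.PosDef := by
    refine PosDef.mul_mul_conjTranspose_same (PosDef.diagonal fun i => ?_)
      (vecMul_injective_of_isUnit (IsUnit.of_mul_eq_one _ hV'))
    have : 0 < if t i = 0 then (1 : ℝ) else √(t i) := by
      split_ifs with h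
      · exact one_pos
      · exact lt_of_le_of_ne (Real.sqrt_nonneg _) (st i h).symm
    exact_mod_cast this
  have hy : ∀ k, d * R k * d ∈ fixAlg f bi := by
    intro k
    rw [mem_fixAlg]
    refine fixed_commutes hτ hbH hbbi hfsum ?_
    have e1 : b * (d * R k * d) * b = R k := by
      calc b * (d * R k * d) * b = (b * d) * R k * (d * b) := by simp only [Matrix.mul_assoc]
        _ = R k := by rw [hbd, hdb, hpR, hRp]
    rw [e1, Fintype.sum_option, Fintype.sum_prod_type]
    simp only [f, Option.elim_some, Option.elim_none, haH, hR]
    rw [← Matrix.mul_assoc, ← Matrix.mul_assoc, hqd]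
    simp
  have hstar : ∀ x ∈ fixAlg f bi, xᴴ ∈ fixAlg f bi :=
    fun x hx => fixAlg_star hτ hbH hbbi hfsum hx
  obtain ⟨h, k, hh, hk, hbhk⟩ := exists_factor (fixAlg f bi) hstar hbpd hbbi
    (fun x hx => fixAlg_conj hτ hbH hbbi hfsum hx)
  have hbib : bi * b = 1 := mul_eq_one_comm.mp hbbi
  have hK : ∀ α β, ∀ z ∈ fixAlg f bi, z * (a α β * bi) = a α β * bi * z :=
    fun α β z hz => mem_fixAlg.mp hz (some (α, β))
  have hK' : ∀ α β, ∀ z ∈ fixAlg f bi, z * (bi * a α β) = bi * a α β * z :=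
    fun α β z hz => fixAlg_comm_left hτ hbH hbbi hfsum hz (some (α, β))
  have hX : ∀ α α' β, ∀ z ∈ fixAlg f bi, a α β * bi * (k * k) * (bi * a β α') * z =
      z * (a α β * bi * (k * k) * (bi * a β α')) := by
    intro α α' β z hz
    have c1 : Commute z (a α β * bi) := hK α β z hz
    have c2 : Commute z (bi * a β α') := hK' β α' z hz
    have c3 : Commute z k := (hk z hz).symm
    exact ((c1.mul_right (c3.mul_right c3)).mul_right c2).eq.symm
  refine ⟨_, fun α α' => ∑ β, a α β * bi * (k * k) * (bi * a β α'),
    fun i => b * (d * R i * d) * bi * (h * h), hstar, ?_, ?_, ?_⟩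
  · intro i
    exact (fixAlg f bi).mul_mem (fixAlg_conj hτ hbH hbbi hfsum (hy i))
      ((fixAlg f bi).mul_mem hh hh)
  · intro α α' z hz
    rw [Finset.sum_mul, Finset.mul_sum]
    exact Finset.sum_congr rfl fun β _ => hX α α' β z hz
  · intro α α' i
    set y := d * R i * d with hyd
    set y' := b * y * bi with hy'
    have hyN : y' ∈ fixAlg f bi := fixAlg_conj hτ hbH hbbi hfsum (hy i)
    rw [Finset.sum_mul]
    refine Finset.sum_congr rfl fun β _ => ?_
    have hhk : h * k = k * h := (hk h hh).symm
    calc a α β * y * a β α' = (a α β * bi) * y' * (b * a β α') := by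
          calc a α β * y * a β α' = a α β * (bi * b) * y * (bi * b) * a β α' := by
                rw [hbib, Matrix.mul_one, Matrix.mul_one]
            _ = _ := by rw [hy']; simp only [Matrix.mul_assoc]
      _ = y' * ((a α β * bi) * (b * b) * (bi * a β α')) := by
          rw [← hK α β y' hyN]
          calc _ = y' * (a α β * bi) * (b * (b * bi) * a β α') := by rw [hbbi, Matrix.mul_one]
            _ = _ := by simp only [Matrix.mul_assoc]
      _ = y' * ((a α β * bi) * (h * h * (k * k)) * (bi * a β α')) := by
          congr 3
          rw [hbhk]
          calc h * k * (h * k) = h * (k * h) * k := by simp only [Matrix.mul_assoc]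
            _ = h * h * (k * k) := by rw [← hhk]; simp only [Matrix.mul_assoc]
      _ = y' * (h * h) * ((a α β * bi) * (k * k) * (bi * a β α')) := by
          have : a α β * bi * (h * h) = h * h * (a α β * bi) :=
            (hK α β (h * h) ((fixAlg f bi).mul_mem hh hh)).symm
          calc _ = y' * ((a α β * bi * (h * h)) * (k * k) * (bi * a β α')) := by
                simp only [Matrix.mul_assoc]
            _ = _ := by rw [this]; simp only [Matrix.mul_assoc]
      _ = (a α β * bi) * (k * k) * (bi * a β α') * (y' * (h * h)) :=
          (hX α α' β _ ((fixAlg f bi).mul_mem hyN ((fixAlg f bi).mul_mem hh hh))).symm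

end Factorization

section Normalize

variable {L R : Type*} [Fintype L] [DecidableEq L] [Fintype R] [DecidableEq R]

theorem exists_state (n : Type*) [Fintype n] [DecidableEq n] [Nonempty n] :
    ∃ M : Matrix n n ℂ, IsState M := by
  obtain ⟨i⟩ := ‹Nonempty n›
  refine ⟨diagonal (Pi.single i 1), PosSemidef.diagonal ?_, ?_⟩
  · intro k
    by_cases h : k = i
    · subst h; simp
    · simp [h]
  · rw [trace_diagonal]; simp

/-- A positive semidefinite product `Λ ⊗ Γ` is a nonnegative multiple of a product of states.
The factors themselves need not be positive, only proportional to positive matrices. -/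
theorem normalize_product [Nonempty L] [Nonempty R] {Λ : Matrix L L ℂ} {Γ : Matrix R R ℂ}
    (hpos : (kronecker Λ Γ).PosSemidef) :
    ∃ (p : ℝ) (M : Matrix L L ℂ) (N : Matrix R R ℂ), 0 ≤ p ∧ IsState M ∧ IsState N ∧
      (p : ℂ) = Λ.trace * Γ.trace ∧ ∀ i i' k k', Λ i i' * Γ k k' = (p : ℂ) * M i i' * N k k' := by
  have htr : (kronecker Λ Γ).trace = Λ.trace * Γ.trace := trace_kronecker Λ Γ
  have hnn := hpos.trace_nonneg
  rw [htr] at hnn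
  obtain ⟨p, hp⟩ : ∃ p : ℝ, (p : ℂ) = Λ.trace * Γ.trace := ⟨_, (Complex.eq_re_of_ofReal_le hnn).symm⟩
  rw [← hp] at hnn
  have hp0 : 0 ≤ p := by exact_mod_cast hnn
  by_cases h0 : p = 0
  · obtain ⟨M, hM⟩ := exists_state L
    obtain ⟨N, hN⟩ := exists_state R
    refine ⟨p, M, N, hp0, hM, hN, hp, fun i i' k k' => ?_⟩
    have : kronecker Λ Γ = 0 := hpos.trace_eq_zero_iff.mp (by rw [htr, ← hp, h0]; simp)
    have := congrFun (congrFun this (i, k)) (i', k')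
    rw [h0]
    simpa [kronecker] using this
  · have hpc : (p : ℂ) ≠ 0 := by exact_mod_cast h0
    have hl : Λ.trace ≠ 0 := fun h => hpc (by rw [hp, h, zero_mul])
    have hr : Γ.trace ≠ 0 := fun h => hpc (by rw [hp, h, mul_zero])
    have hi : (0 : ℂ) ≤ ((p⁻¹ : ℝ) : ℂ) := by exact_mod_cast inv_nonneg.mpr hp0
    refine ⟨p, (Λ.trace)⁻¹ • Λ, (Γ.trace)⁻¹ • Γ, hp0, ⟨?_, ?_⟩, ⟨?_, ?_⟩, hp, ?_⟩
    · have h1 : (Λ.trace)⁻¹ • Λ = ((p⁻¹ : ℝ) : ℂ) • ptr (Equiv.refl (L × R)) (kronecker Λ Γ) := by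
        ext i i'
        rw [Matrix.smul_apply, Matrix.smul_apply, ptr_apply]
        have : ∑ z, kronecker Λ Γ ((Equiv.refl (L × R)).symm (i, z))
            ((Equiv.refl (L × R)).symm (i', z)) = Λ i i' * Γ.trace := by
          rw [trace, Finset.mul_sum]; rfl
        rw [this]; push_cast; rw [hp, smul_eq_mul, smul_eq_mul]; field_simp
      rw [h1]
      exact (ptr_posSemidef _ hpos).smul hi
    · rw [trace_smul, smul_eq_mul, inv_mul_cancel₀ hl]
    · have h1 : (Γ.trace)⁻¹ • Γ = ((p⁻¹ : ℝ) : ℂ) • ptr (Equiv.prodComm L R) (kronecker Λ Γ) := by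
        ext i i'
        rw [Matrix.smul_apply, Matrix.smul_apply, ptr_apply]
        have : ∑ z, kronecker Λ Γ ((Equiv.prodComm L R).symm (i, z))
            ((Equiv.prodComm L R).symm (i', z)) = Λ.trace * Γ i i' := by
          rw [trace, Finset.sum_mul]; rfl
        rw [this]; push_cast; rw [hp, smul_eq_mul, smul_eq_mul]; field_simp
      rw [h1]
      exact (ptr_posSemidef _ hpos).smul hi
    · rw [trace_smul, smul_eq_mul, inv_mul_cancel₀ hr]
    · intro i i' k k'
      rw [Matrix.smul_apply, Matrix.smul_apply, hp, smul_eq_mul, smul_eq_mul]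
      field_simp

end Normalize

/-! ### The structure theorem -/

section Assembly

theorem blockDiagonal_conj_apply {B J : Type*} [Fintype B] [Fintype J] [DecidableEq J] {l r : J → ℕ}
    (U : Matrix ((j : J) × (Fin (l j) × Fin (r j))) B ℂ)
    (D : (j : J) → Matrix (Fin (l j) × Fin (r j)) (Fin (l j) × Fin (r j)) ℂ) (b b' : B) :
    (Uᴴ * blockDiagonal' D * U) b b' = ∑ j, ∑ l₁, ∑ r₁, ∑ l₂, ∑ r₂,
      star (U ⟨j, (l₁, r₁)⟩ b) * D j (l₁, r₁) (l₂, r₂) * U ⟨j, (l₂, r₂)⟩ b' := by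
  rw [Matrix.mul_assoc, mul_apply, Fintype.sum_sigma]
  refine Finset.sum_congr rfl fun j _ => ?_
  rw [Fintype.sum_prod_type]
  refine Finset.sum_congr rfl fun l₁ _ => Finset.sum_congr rfl fun r₁ _ => ?_
  rw [conjTranspose_apply, mul_apply, Fintype.sum_sigma, Finset.sum_eq_single j]
  · rw [Fintype.sum_prod_type]
    simp only [Finset.mul_sum, blockDiagonal'_apply_eq, mul_assoc]
  · intro j' _ hj
    refine Finset.sum_eq_zero fun k _ => ?_
    rw [blockDiagonal'_apply_ne _ _ _ hj.symm, zero_mul]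
  · simp

variable {A B C : Type*} [Fintype A] [DecidableEq A] [Fintype B] [DecidableEq B]
  [Fintype C] [DecidableEq C]

theorem amp_assoc_apply (M : Matrix (A × B) (A × B) ℂ) (α α' : A) (b b' : B) (c c' : C) :
    amp (Equiv.prodAssoc A B C).symm M (α, b, c) (α', b', c') =
      M (α, b) (α', b') * (1 : Matrix C C ℂ) c c' := rfl

theorem amp_comm_apply (M : Matrix B B ℂ) (α α' : A) (k k' : B) :
    amp (Equiv.prodComm A B) M (α, k) (α', k') = M k k' * (1 : Matrix A A ℂ) α α' := rfl

theorem amp_refl_apply (M : Matrix B B ℂ) (b b' : B) (c c' : C) :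
    amp (Equiv.refl (B × C)) M (b, c) (b', c') = M b b' * (1 : Matrix C C ℂ) c c' := rfl

/-- The entries of `(a ⊗ 1_C) (1_A ⊗ d G d) (a ⊗ 1_C)`, read as matrices on `B`. -/
theorem recovery_slice (a : Matrix (A × B) (A × B) ℂ) (d : Matrix B B ℂ)
    (G : Matrix (B × C) (B × C) ℂ) (α α' : A) (c c' : C) :
    (Matrix.of fun b b' => (amp (Equiv.prodAssoc A B C).symm a *
        amp (Equiv.prodComm A (B × C)) (amp (Equiv.refl (B × C)) d * G *
          amp (Equiv.refl (B × C)) d) *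
        amp (Equiv.prodAssoc A B C).symm a) (α, b, c) (α', b', c')) =
      ∑ β, (Matrix.of fun b b' => a (α, b) (β, b')) *
        (d * (Matrix.of fun b b' => G (b, c) (b', c')) * d) *
        (Matrix.of fun b b' => a (β, b) (α', b')) := by
  have hG : ∀ b b', (amp (Equiv.refl (B × C)) d * G * amp (Equiv.refl (B × C)) d) (b, c) (b', c') =
      (d * (Matrix.of fun b b' => G (b, c) (b', c')) * d) b b' := by
    intro b b'
    simp [mul_apply, amp_refl_apply, Fintype.sum_prod_type, one_apply, mul_ite, ite_mul]
  ext b b'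
  rw [of_apply, Matrix.sum_apply, mul_apply, Fintype.sum_prod_type]
  refine Finset.sum_congr rfl fun β _ => ?_
  rw [Fintype.sum_prod_type, mul_apply]
  refine Finset.sum_congr rfl fun b₂ _ => ?_
  rw [Finset.sum_eq_single c']
  · congr 1
    · rw [mul_apply, mul_apply, Fintype.sum_prod_type, Finset.sum_eq_single β]
      · rw [Fintype.sum_prod_type]
        refine Finset.sum_congr rfl fun b₁ _ => ?_
        rw [Finset.sum_eq_single c]
        · rw [← hG, amp_assoc_apply, amp_comm_apply, one_apply_eq, one_apply_eq, mul_one, mul_one]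
          rfl
        · intro c₁ _ hc
          rw [amp_assoc_apply, one_apply_ne hc.symm, mul_zero, zero_mul]
        · simp
      · intro β' _ hβ
        refine Finset.sum_eq_zero fun k _ => ?_
        rw [amp_comm_apply, one_apply_ne hβ, mul_zero, mul_zero]
      · simp
    · rw [amp_assoc_apply, one_apply_eq, mul_one]
      rfl
  · intro c₁ _ hc
    rw [amp_assoc_apply, one_apply_ne hc, mul_zero, mul_zero]
  · simp

/-- A state saturating strong subadditivity splits over `B`: the `B`-matrix with entries
`ρ (α, ·, c) (α', ·, c')` is a product `X_{αα'} Y_{cc'}` of elements of two commuting algebras. -/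
theorem exists_commuting_product {ρ : Matrix (A × B × C) (A × B × C) ℂ} (hρ : ρ.PosSemidef)
    (hsat : S3AB ρ + S3BC ρ = S3ABC ρ + S3B ρ) :
    ∃ (S : Set (Matrix B B ℂ)) (X : A → A → Matrix B B ℂ) (Y : C × C → Matrix B B ℂ),
      (∀ x ∈ Subalgebra.centralizer ℂ S, xᴴ ∈ Subalgebra.centralizer ℂ S) ∧
      (∀ k, Y k ∈ Subalgebra.centralizer ℂ S) ∧
      (∀ α α', ∀ z ∈ Subalgebra.centralizer ℂ S, X α α' * z = z * X α α') ∧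
      ∀ α α' c c', (Matrix.of fun b b' => ρ (α, b, c) (α', b', c')) = X α α' * Y (c, c') := by
  obtain ⟨W, s, V, t, hW, hV, hV', hs, ht, hAB, hB, hrec⟩ := markov_identity hρ hsat
  set a := spec W (fun k => √(s k)) with ha
  set G := ptr (Equiv.prodComm A (B × C)) ρ with hG
  have haa : a * a = spec W s := by
    rw [ha, spec_mul hW]; congr 1; ext k; exact Real.mul_self_sqrt (hs k)
  have haH : aᴴ = a := spec_conjTranspose _ _
  have hslice := recovery_slice (C := C) a (spec V (fun k => (√(t k))⁻¹)) G
  simp only [← hrec] at hslice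
  obtain ⟨S, X, Y, h1, h2, h3, h4⟩ := exists_factorization
    (a := fun α β => Matrix.of fun b b' => a (α, b) (β, b'))
    (by
      intro α β; ext b b'
      exact congrFun (congrFun haH (β, b)) (α, b')) hV hV' ht
    (by
      rw [← hB]
      ext b b'
      have : ∀ α, (∑ β, (Matrix.of fun b b' => a (α, b) (β, b')) *
          (Matrix.of fun b b' => a (β, b) (α, b')) : Matrix B B ℂ) b b' =
          ∑ c, ρ (α, b, c) (α, b', c) := by
        intro α
        have := congrFun (congrFun (haa.trans hAB.symm) (α, b)) (α, b')
        rw [mul_apply, Fintype.sum_prod_type] at this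
        rw [Matrix.sum_apply]
        exact this
      rw [Matrix.sum_apply]
      simp only [this]
      exact Finset.sum_comm)
    (κ := C × C) (R := fun k => Matrix.of fun b b' => G (b, k.1) (b', k.2))
    (by
      rintro ⟨c, c'⟩
      simp only [← hslice]
      ext b b'
      rw [Matrix.sum_apply]
      rfl)
  refine ⟨S, X, Y, h1, h2, h3, fun α α' c c' => ?_⟩
  rw [hslice, ← h4]

end Assembly

/-- **Proposition (Hayden–Jozsa–Petz–Winter).** A tripartite state saturating strong
subadditivity at pivot `B`, i.e. `S(AB) + S(BC) = S(ABC) + S(B)`, has the form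
`ρ^{ABC} = ⊕_j p_j ρ_j^{A b_j^L} ⊗ ρ_j^{b_j^R C}` with respect to an orthogonal
decomposition `H_B = ⊕_j H_{b_j^L} ⊗ H_{b_j^R}` of `B`'s Hilbert space.

The decomposition is encoded by a finite index type `J`, dimensions `l j`, `r j`
and a unitary change of basis `U : ⊕_j (ℂ^{l j} ⊗ ℂ^{r j}) → H_B` (unitarity being
`U * Uᴴ = 1` and `Uᴴ * U = 1`); the displayed entrywise identity says exactly
`ρ^{ABC} = (1_A ⊗ Uᴴ ⊗ 1_C) (⊕_j p_j ρL_j ⊗ ρR_j) (1_A ⊗ U ⊗ 1_C)`,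
where the middle matrix is block diagonal in `j`. -/
theorem structure_of_SSA_saturating_states
    {A B C : Type*} [Fintype A] [DecidableEq A] [Fintype B] [DecidableEq B]
    [Fintype C] [DecidableEq C]
    (ρ : Matrix (A × B × C) (A × B × C) ℂ) (hρ : IsState ρ)
    (hsat : S3AB ρ + S3BC ρ = S3ABC ρ + S3B ρ) :
    ∃ (J : Type) (_ : Fintype J) (_ : DecidableEq J) (l r : J → ℕ)
      (U : Matrix ((j : J) × (Fin (l j) × Fin (r j))) B ℂ)
      (p : J → ℝ)
      (ρL : (j : J) → Matrix (A × Fin (l j)) (A × Fin (l j)) ℂ)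
      (ρR : (j : J) → Matrix (Fin (r j) × C) (Fin (r j) × C) ℂ),
      U * U.conjTranspose = 1 ∧
      U.conjTranspose * U = 1 ∧
      (∀ j, 0 ≤ p j) ∧ (∑ j, p j = 1) ∧
      (∀ j, IsState (ρL j)) ∧ (∀ j, IsState (ρR j)) ∧
      (∀ a b c a' b' c', ρ (a, b, c) (a', b', c') =
        ∑ j, ∑ l₁, ∑ r₁, ∑ l₂, ∑ r₂,
          star (U ⟨j, (l₁, r₁)⟩ b) *
            ((p j : ℂ) * ρL j (a, l₁) (a', l₂) * ρR j (r₁, c) (r₂, c')) *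
            U ⟨j, (l₂, r₂)⟩ b') := by
  obtain ⟨hpsd, htr⟩ := hρ
  obtain ⟨S, X, Y, hstar, hY, hX, hXY⟩ := exists_commuting_product hpsd hsat
  obtain ⟨J, _, _, l, r, U, hU, hU', hl, hr, hN, hN'⟩ := star_structure hstar
  choose y hy using fun k => hN (Y k) (hY k)
  choose x hx using fun α α' => hN' (X α α') (hX α α')
  have hblock : ∀ α α' c c', U * (Matrix.of fun b b' => ρ (α, b, c) (α', b', c')) * Uᴴ =
      blockDiagonal' fun j => kronecker (x α α' j) (y (c, c') j) := by
    intro α α' c c'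
    calc U * (Matrix.of fun b b' => ρ (α, b, c) (α', b', c')) * Uᴴ =
        U * X α α' * (Uᴴ * U) * Y (c, c') * Uᴴ := by
          rw [hXY, hU', Matrix.mul_one]; simp only [Matrix.mul_assoc]
      _ = (U * X α α' * Uᴴ) * (U * Y (c, c') * Uᴴ) := by simp only [Matrix.mul_assoc]
      _ = _ := by
          rw [hx, hy, ← blockDiagonal'_mul]
          congr 1
          funext j
          unfold kronecker
          rw [← mul_kronecker_mul, Matrix.mul_one, Matrix.one_mul]
  let Λ : (j : J) → Matrix (A × Fin (l j)) (A × Fin (l j)) ℂ := fun j =>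
    Matrix.of fun p q => x p.1 q.1 j p.2 q.2
  let Γ : (j : J) → Matrix (Fin (r j) × C) (Fin (r j) × C) ℂ := fun j =>
    Matrix.of fun p q => y (p.2, q.2) j p.1 q.1
  have hentry : ∀ j α α' c c' l₁ l₂ r₁ r₂, Λ j (α, l₁) (α', l₂) * Γ j (r₁, c) (r₂, c') =
      (U * (Matrix.of fun b b' => ρ (α, b, c) (α', b', c')) * Uᴴ) ⟨j, l₁, r₁⟩ ⟨j, l₂, r₂⟩ := by
    intro j α α' c c' l₁ l₂ r₁ r₂
    rw [hblock, blockDiagonal'_apply_eq]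
    rfl
  -- each block is a compression of `ρ`
  have hpos : ∀ j, (kronecker (Λ j) (Γ j)).PosSemidef := by
    intro j
    let F : Matrix ((A × Fin (l j)) × (Fin (r j) × C)) (A × B × C) ℂ := Matrix.of fun p q =>
      (1 : Matrix A A ℂ) p.1.1 q.1 * (1 : Matrix C C ℂ) p.2.2 q.2.2 * U ⟨j, p.1.2, p.2.1⟩ q.2.1
    have : kronecker (Λ j) (Γ j) = F * ρ * Fᴴ := by
      ext ⟨⟨α, l₁⟩, r₁, c⟩ ⟨⟨α', l₂⟩, r₂, c'⟩
      refine (hentry j α α' c c' l₁ l₂ r₁ r₂).trans ?_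
      simp [F, mul_apply, Fintype.sum_prod_type, one_apply, apply_ite (starRingEnd ℂ), mul_ite]
    rw [this]
    exact hpsd.mul_mul_conjTranspose_same F
  have hne : Nonempty (A × B × C) := by
    by_contra h
    rw [not_nonempty_iff] at h
    rw [trace, Finset.univ_eq_empty, Finset.sum_empty] at htr
    exact zero_ne_one htr
  obtain ⟨α₀, -, c₀⟩ := hne
  have hnorm := fun j =>
    haveI : Nonempty (A × Fin (l j)) := ⟨(α₀, ⟨0, hl j⟩)⟩
    haveI : Nonempty (Fin (r j) × C) := ⟨(⟨0, hr j⟩, c₀)⟩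
    normalize_product (hpos j)
  choose p M N hp hM hN' hptr hMN using hnorm
  refine ⟨J, inferInstance, inferInstance, l, r, U, p, M, N, hU, hU', hp, ?_, hM, hN', ?_⟩
  · have : ((∑ j, p j : ℝ) : ℂ) = 1 := by
      rw [← htr]
      push_cast
      simp only [hptr]
      calc ∑ j, (Λ j).trace * (Γ j).trace = ∑ j, ∑ α, ∑ c, ∑ l₁, ∑ r₁,
          Λ j (α, l₁) (α, l₁) * Γ j (r₁, c) (r₁, c) := by
            refine Finset.sum_congr rfl fun j _ => ?_
            rw [trace, trace, Fintype.sum_prod_type, Fintype.sum_prod_type_right, Finset.sum_mul]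
            refine Finset.sum_congr rfl fun α _ => ?_
            rw [Finset.mul_sum]
            refine Finset.sum_congr rfl fun c _ => ?_
            rw [Finset.sum_mul_sum]
            rfl
        _ = ∑ α, ∑ c, (U * (Matrix.of fun b b' => ρ (α, b, c) (α, b', c)) * Uᴴ).trace := by
            rw [Finset.sum_comm]
            refine Finset.sum_congr rfl fun α _ => ?_
            rw [Finset.sum_comm]
            refine Finset.sum_congr rfl fun c _ => ?_
            rw [trace, Fintype.sum_sigma]
            refine Finset.sum_congr rfl fun j _ => ?_
            rw [Fintype.sum_prod_type]
            simp only [hentry, diag_apply]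
        _ = ρ.trace := by
            rw [trace, Fintype.sum_prod_type]
            refine Finset.sum_congr rfl fun α _ => ?_
            rw [Fintype.sum_prod_type_right]
            refine Finset.sum_congr rfl fun c _ => ?_
            rw [trace_mul_comm, ← Matrix.mul_assoc, hU', Matrix.one_mul]
            rfl
    exact_mod_cast this
  · intro α b c α' b' c'
    have h1 : (Matrix.of fun b b' => ρ (α, b, c) (α', b', c')) =
        Uᴴ * (blockDiagonal' fun j => kronecker (x α α' j) (y (c, c') j)) * U := by
      rw [← hblock]
      calc _ = (Uᴴ * U) * (Matrix.of fun b b' => ρ (α, b, c) (α', b', c')) * (Uᴴ * U) := by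
            rw [hU', Matrix.one_mul, Matrix.mul_one]
        _ = _ := by simp only [Matrix.mul_assoc]
    have h2 := congrFun (congrFun h1 b) b'
    rw [blockDiagonal_conj_apply] at h2
    refine h2.trans ?_
    refine Finset.sum_congr rfl fun j _ => Finset.sum_congr rfl fun l₁ _ =>
      Finset.sum_congr rfl fun r₁ _ => Finset.sum_congr rfl fun l₂ _ =>
      Finset.sum_congr rfl fun r₂ _ => ?_
    rw [← hMN]
    rfl
end

section
/- There exists a state ρ^{ABCD} of a quadripartite quantum system on finite-dimensional Hilbert spaces that saturates strong subadditivity for the triples ABC and CAB (i.e. I(A;C|B) = 0 and I(C;B|A) = 0) but satisfies I(C;D) = 0 and I(C;AB) = 1, so that I(C;D) < I(C;AB). One such state is ρ^{ABCD} = ½(|000⟩⟨000| + |111⟩⟨111|)^{ABC} ⊗ |0⟩⟨0|^D on four qubits. -/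
/-!
The witness is a classical state: it is diagonal in the computational basis, and so is every
marginal of it. The entropy of a diagonal matrix is the Shannon entropy of its diagonal, because
the eigenvalues and the diagonal entries are both the roots of the characteristic polynomial
(`vNEntropy_diagonal`). The diagonal of the marginal on `D` is the point mass at `0`; the other
marginals that occur are each uniform on two basis states, so their entropy is one bit
(`vNEntropy_uniform_two`). With `S(D) = 0` and all the other entropies equal to `1`, every claim
is arithmetic.
-/

open scoped BigOperators ComplexOrder

section Quad

variable {A B C D : Type*} [Fintype A] [DecidableEq A] [Fintype B] [DecidableEq B]
  [Fintype C] [DecidableEq C] [Fintype D] [DecidableEq D]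
  (ρ : Matrix (A × B × C × D) (A × B × C × D) ℂ)

/-- Entropies of the 15 marginals of a quadripartite state. -/
noncomputable def SA : ℝ :=
  vNEntropy (Matrix.of fun a a' : A => ∑ b, ∑ c, ∑ d, ρ (a, b, c, d) (a', b, c, d))
noncomputable def SB : ℝ :=
  vNEntropy (Matrix.of fun b b' : B => ∑ a, ∑ c, ∑ d, ρ (a, b, c, d) (a, b', c, d))
noncomputable def SC : ℝ :=
  vNEntropy (Matrix.of fun c c' : C => ∑ a, ∑ b, ∑ d, ρ (a, b, c, d) (a, b, c', d))
noncomputable def SD : ℝ :=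
  vNEntropy (Matrix.of fun d d' : D => ∑ a, ∑ b, ∑ c, ρ (a, b, c, d) (a, b, c, d'))
noncomputable def SAB : ℝ :=
  vNEntropy (Matrix.of fun p q : A × B => ∑ c, ∑ d, ρ (p.1, p.2, c, d) (q.1, q.2, c, d))
noncomputable def SAC : ℝ :=
  vNEntropy (Matrix.of fun p q : A × C => ∑ b, ∑ d, ρ (p.1, b, p.2, d) (q.1, b, q.2, d))
noncomputable def SAD : ℝ :=
  vNEntropy (Matrix.of fun p q : A × D => ∑ b, ∑ c, ρ (p.1, b, c, p.2) (q.1, b, c, q.2))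
noncomputable def SBC : ℝ :=
  vNEntropy (Matrix.of fun p q : B × C => ∑ a, ∑ d, ρ (a, p.1, p.2, d) (a, q.1, q.2, d))
noncomputable def SBD : ℝ :=
  vNEntropy (Matrix.of fun p q : B × D => ∑ a, ∑ c, ρ (a, p.1, c, p.2) (a, q.1, c, q.2))
noncomputable def SCD : ℝ :=
  vNEntropy (Matrix.of fun p q : C × D => ∑ a, ∑ b, ρ (a, b, p.1, p.2) (a, b, q.1, q.2))
noncomputable def SABC : ℝ :=
  vNEntropy (Matrix.of fun p q : A × B × C =>
    ∑ d, ρ (p.1, p.2.1, p.2.2, d) (q.1, q.2.1, q.2.2, d))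
noncomputable def SABD : ℝ :=
  vNEntropy (Matrix.of fun p q : A × B × D =>
    ∑ c, ρ (p.1, p.2.1, c, p.2.2) (q.1, q.2.1, c, q.2.2))
noncomputable def SACD : ℝ :=
  vNEntropy (Matrix.of fun p q : A × C × D =>
    ∑ b, ρ (p.1, b, p.2.1, p.2.2) (q.1, b, q.2.1, q.2.2))
noncomputable def SBCD : ℝ :=
  vNEntropy (Matrix.of fun p q : B × C × D =>
    ∑ a, ρ (a, p.1, p.2.1, p.2.2) (a, q.1, q.2.1, q.2.2))
noncomputable def SABCD : ℝ := vNEntropy ρ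

end Quad

/-- The von Neumann entropy of a real diagonal matrix is the Shannon entropy of its diagonal. -/
theorem vNEntropy_diagonal {n : Type*} [Fintype n] [DecidableEq n] (d : n → ℝ) :
    vNEntropy (Matrix.diagonal fun i => (d i : ℂ)) = -∑ i, d i * Real.logb 2 (d i) := by
  have h : (Matrix.diagonal fun i => (d i : ℂ)).IsHermitian := by
    rw [Matrix.isHermitian_diagonal_iff]
    intro i
    simp [isSelfAdjoint_iff]
  have hroots := h.roots_charpoly_eq_eigenvalues
  rw [Matrix.charpoly_diagonal, Polynomial.roots_prod _ _
    (Finset.prod_ne_zero_iff.mpr fun i _ => Polynomial.X_sub_C_ne_zero _)] at hroots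
  simp only [Polynomial.roots_X_sub_C, Multiset.bind_singleton] at hroots
  -- Both sides are multisets of complex numbers; apply `z ↦ Re z * log₂ (Re z)` and sum.
  have hsum := congrArg
    (fun s : Multiset ℂ => (s.map fun z => z.re * Real.logb 2 z.re).sum) hroots
  simp only [Multiset.map_map, Function.comp_def, RCLike.ofReal_eq_complex_ofReal,
    Complex.ofReal_re] at hsum
  rw [vNEntropy, dif_pos h]
  exact congrArg Neg.neg hsum.symm

/-- A matrix that is diagonal and uniform on a set `s` of two basis states has entropy one bit. -/
theorem vNEntropy_uniform_two {n : Type*} [Fintype n] [DecidableEq n] (s : Finset n)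
    (hs : s.card = 2) (M : Matrix n n ℂ)
    (hM : ∀ i j, M i j = if i = j ∧ i ∈ s then 1 / 2 else 0) : vNEntropy M = 1 := by
  have hdiag : M = Matrix.diagonal fun i => ((if i ∈ s then 1 / 2 else 0 : ℝ) : ℂ) := by
    ext i j
    rw [hM, Matrix.diagonal_apply]
    by_cases hi : i ∈ s <;> simp [hi]
  have hlog : Real.logb 2 (1 / 2) = -1 := by
    rw [one_div, Real.logb_inv, Real.logb_self_eq_one one_lt_two]
  rw [hdiag, vNEntropy_diagonal]
  simp only [ite_mul, zero_mul, Finset.sum_ite_mem, Finset.univ_inter]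
  rw [Finset.sum_congr rfl fun i hi => by rw [if_pos hi, hlog], Finset.sum_const, hs]
  norm_num

/-- The state `½(|000⟩⟨000| + |111⟩⟨111|) ⊗ |0⟩⟨0|` on four qubits. -/
noncomputable def ghzDiag :
    Matrix (Fin 2 × Fin 2 × Fin 2 × Fin 2) (Fin 2 × Fin 2 × Fin 2 × Fin 2) ℂ :=
  Matrix.of fun p q : Fin 2 × Fin 2 × Fin 2 × Fin 2 =>
    if p = q ∧ p.2.2.2 = 0 ∧ p.1 = p.2.1 ∧ p.2.1 = p.2.2.1
    then (1 / 2 : ℂ) else 0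

theorem isState_ghzDiag : IsState ghzDiag := by
  constructor
  · have hdiag : ghzDiag = Matrix.diagonal fun p : Fin 2 × Fin 2 × Fin 2 × Fin 2 =>
        if p.2.2.2 = 0 ∧ p.1 = p.2.1 ∧ p.2.1 = p.2.2.1 then (1 / 2 : ℂ) else 0 := by
      ext p q
      simp only [ghzDiag, Matrix.of_apply, Matrix.diagonal_apply, ite_and]
    rw [hdiag, Matrix.posSemidef_diagonal_iff]
    intro p
    split_ifs
    · rw [Complex.le_def]
      norm_num
    · exact le_rfl
  · simp [ghzDiag, Matrix.trace, Fintype.sum_prod_type, Fin.sum_univ_two]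
    norm_num

theorem SA_ghzDiag : SA ghzDiag = 1 := by
  refine vNEntropy_uniform_two Finset.univ (by decide) _ ?_
  intro i j
  fin_cases i <;> fin_cases j <;>
    simp [ghzDiag, Fin.sum_univ_two]

theorem SB_ghzDiag : SB ghzDiag = 1 := by
  refine vNEntropy_uniform_two Finset.univ (by decide) _ ?_
  intro i j
  fin_cases i <;> fin_cases j <;>
    simp [ghzDiag, Fin.sum_univ_two]

theorem SC_ghzDiag : SC ghzDiag = 1 := by
  refine vNEntropy_uniform_two Finset.univ (by decide) _ ?_
  intro i j
  fin_cases i <;> fin_cases j <;>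
    simp [ghzDiag, Fin.sum_univ_two]

theorem SAB_ghzDiag : SAB ghzDiag = 1 := by
  refine vNEntropy_uniform_two {(0, 0), (1, 1)} (by decide) _ ?_
  rintro ⟨i₁, i₂⟩ ⟨j₁, j₂⟩
  fin_cases i₁ <;> fin_cases i₂ <;> fin_cases j₁ <;> fin_cases j₂ <;>
    simp [ghzDiag, Fin.sum_univ_two]

theorem SAC_ghzDiag : SAC ghzDiag = 1 := by
  refine vNEntropy_uniform_two {(0, 0), (1, 1)} (by decide) _ ?_
  rintro ⟨i₁, i₂⟩ ⟨j₁, j₂⟩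
  fin_cases i₁ <;> fin_cases i₂ <;> fin_cases j₁ <;> fin_cases j₂ <;>
    simp [ghzDiag, Fin.sum_univ_two]

theorem SBC_ghzDiag : SBC ghzDiag = 1 := by
  refine vNEntropy_uniform_two {(0, 0), (1, 1)} (by decide) _ ?_
  rintro ⟨i₁, i₂⟩ ⟨j₁, j₂⟩
  fin_cases i₁ <;> fin_cases i₂ <;> fin_cases j₁ <;> fin_cases j₂ <;>
    simp [ghzDiag, Fin.sum_univ_two]

theorem SCD_ghzDiag : SCD ghzDiag = 1 := by
  refine vNEntropy_uniform_two {(0, 0), (1, 0)} (by decide) _ ?_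
  rintro ⟨i₁, i₂⟩ ⟨j₁, j₂⟩
  fin_cases i₁ <;> fin_cases i₂ <;> fin_cases j₁ <;> fin_cases j₂ <;>
    simp [ghzDiag, Fin.sum_univ_two]

theorem SABC_ghzDiag : SABC ghzDiag = 1 := by
  refine vNEntropy_uniform_two {(0, 0, 0), (1, 1, 1)} (by decide) _ ?_
  rintro ⟨i₁, i₂, i₃⟩ ⟨j₁, j₂, j₃⟩
  fin_cases i₁ <;> fin_cases i₂ <;> fin_cases i₃ <;>
    fin_cases j₁ <;> fin_cases j₂ <;> fin_cases j₃ <;>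
    simp [ghzDiag, Fin.sum_univ_two]

theorem SD_ghzDiag : SD ghzDiag = 0 := by
  have hdiag : (Matrix.of fun d d' : Fin 2 => ∑ a, ∑ b, ∑ c, ghzDiag (a, b, c, d) (a, b, c, d'))
      = Matrix.diagonal fun d => ((if d = 0 then 1 else 0 : ℝ) : ℂ) := by
    ext i j
    fin_cases i <;> fin_cases j <;> simp [ghzDiag, Fin.sum_univ_two]
    norm_num
  rw [SD, hdiag, vNEntropy_diagonal]
  simp

/-- **Remark (necessity of the third constraint).** There is a four-qubit state
saturating strong subadditivity for the triples `ABC` and `CAB`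
(`I(A;C|B) = 0` and `I(C;B|A) = 0`), yet with `I(C;D) = 0` and `I(C;AB) = 1`,
hence `I(C;D) < I(C;AB)`.  Witness:
`ρ = ½(|000⟩⟨000| + |111⟩⟨111|)^{ABC} ⊗ |0⟩⟨0|^D`. -/
theorem counterexample_two_constraints_ABC_CAB :
    ∃ ρ : Matrix (Fin 2 × Fin 2 × Fin 2 × Fin 2) (Fin 2 × Fin 2 × Fin 2 × Fin 2) ℂ,
      ρ = (Matrix.of fun p q : Fin 2 × Fin 2 × Fin 2 × Fin 2 =>
            if p = q ∧ p.2.2.2 = 0 ∧ p.1 = p.2.1 ∧ p.2.1 = p.2.2.1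
            then (1 / 2 : ℂ) else 0) ∧
      IsState ρ ∧
      SAB ρ + SBC ρ - SABC ρ - SB ρ = 0 ∧
      SAC ρ + SAB ρ - SABC ρ - SA ρ = 0 ∧
      SC ρ + SD ρ - SCD ρ = 0 ∧
      SC ρ + SAB ρ - SABC ρ = 1 ∧
      SC ρ + SD ρ - SCD ρ < SC ρ + SAB ρ - SABC ρ := by
  refine ⟨ghzDiag, rfl, isState_ghzDiag, ?_⟩
  rw [SA_ghzDiag, SB_ghzDiag, SC_ghzDiag, SD_ghzDiag, SAB_ghzDiag, SAC_ghzDiag, SBC_ghzDiag,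
    SCD_ghzDiag, SABC_ghzDiag]
  norm_num
end

section
/- There exists a state ρ^{ABCD} of a quadripartite quantum system on finite-dimensional Hilbert spaces that saturates strong subadditivity for the triples ABC and ADB (i.e. I(A;C|B) = 0 and I(A;B|D) = 0) but satisfies I(C;D) = 0 and I(C;AB) = 1, so that I(C;D) < I(C;AB). One such state is ρ^{ABCD} = ½(|00⟩⟨00| + |11⟩⟨11|)^{BC} ⊗ |00⟩⟨00|^{AD} on four qubits. -/
/-!
The state is diagonal in the computational basis, hence so is each of its marginals, and the
entropy of a real diagonal matrix is the Shannon entropy of its diagonal (`vNEntropy_diagonal`).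
The marginals on `D` and `AD` are the pure state `|0…0⟩`, of entropy `0`. Every other marginal in
the statement contains `B` or `C` and is an equal mixture of two orthogonal basis states, of
entropy `1`. The claims then reduce to arithmetic with these values.
-/

open scoped BigOperators ComplexOrder

/-- An equal mixture of two distinct basis states has entropy `1`. -/
theorem vNEntropy_eq_one {n : Type*} [Fintype n] [DecidableEq n] {M : Matrix n n ℂ} (x y : n)
    (hxy : x ≠ y)
    (hM : M = Matrix.diagonal fun i => ((if i = x ∨ i = y then 1 / 2 else 0 : ℝ) : ℂ)) :
    vNEntropy M = 1 := by
  have hsum : ∀ i, (if i = x ∨ i = y then 1 / 2 else 0 : ℝ)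
      * Real.logb 2 (if i = x ∨ i = y then 1 / 2 else 0 : ℝ)
      = (if i = x then -(1 / 2) else 0) + (if i = y then -(1 / 2) else 0) := by
    intro i
    have hlog : Real.logb 2 (1 / 2) = -1 := by simp [Real.logb_inv]
    by_cases hx : i = x
    · have hy : i ≠ y := fun h => hxy (hx.symm.trans h)
      rw [if_pos (Or.inl hx), if_pos hx, if_neg hy, hlog]
      norm_num
    · by_cases hy : i = y
      · rw [if_pos (Or.inr hy), if_neg hx, if_pos hy, hlog]
        norm_num
      · simp [hx, hy]
  rw [hM, vNEntropy_diagonal, Finset.sum_congr rfl fun i _ => hsum i, Finset.sum_add_distrib]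
  simp
  norm_num

/-- A basis state has entropy `0`. -/
theorem vNEntropy_eq_zero {n : Type*} [Fintype n] [DecidableEq n] {M : Matrix n n ℂ} (x : n)
    (hM : M = Matrix.diagonal fun i => ((if i = x then 1 else 0 : ℝ) : ℂ)) :
    vNEntropy M = 0 := by
  rw [hM, vNEntropy_diagonal, neg_eq_zero]
  refine Finset.sum_eq_zero fun i _ => ?_
  by_cases hx : i = x <;> simp [hx]

/-- **Remark (necessity of the second constraint).** There is a four-qubit state
saturating strong subadditivity for the triples `ABC` and `ADB`
(`I(A;C|B) = 0` and `I(A;B|D) = 0`), yet with `I(C;D) = 0` and `I(C;AB) = 1`,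
hence `I(C;D) < I(C;AB)`.  Witness:
`ρ = ½(|00⟩⟨00| + |11⟩⟨11|)^{BC} ⊗ |00⟩⟨00|^{AD}`. -/
theorem counterexample_two_constraints_ABC_ADB :
    ∃ ρ : Matrix (Fin 2 × Fin 2 × Fin 2 × Fin 2) (Fin 2 × Fin 2 × Fin 2 × Fin 2) ℂ,
      ρ = (Matrix.of fun p q : Fin 2 × Fin 2 × Fin 2 × Fin 2 =>
            if p = q ∧ p.1 = 0 ∧ p.2.2.2 = 0 ∧ p.2.1 = p.2.2.1
            then (1 / 2 : ℂ) else 0) ∧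
      IsState ρ ∧
      SAB ρ + SBC ρ - SABC ρ - SB ρ = 0 ∧
      SAD ρ + SBD ρ - SABD ρ - SD ρ = 0 ∧
      SC ρ + SD ρ - SCD ρ = 0 ∧
      SC ρ + SAB ρ - SABC ρ = 1 ∧
      SC ρ + SD ρ - SCD ρ < SC ρ + SAB ρ - SABC ρ := by
  refine ⟨_, rfl, ?_⟩
  set ρ : Matrix (Fin 2 × Fin 2 × Fin 2 × Fin 2) (Fin 2 × Fin 2 × Fin 2 × Fin 2) ℂ :=
    Matrix.of fun p q : Fin 2 × Fin 2 × Fin 2 × Fin 2 =>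
      if p = q ∧ p.1 = 0 ∧ p.2.2.2 = 0 ∧ p.2.1 = p.2.2.1 then (1 / 2 : ℂ) else 0 with hρ
  have hdiag : ρ = Matrix.diagonal fun p =>
      if p.1 = 0 ∧ p.2.2.2 = 0 ∧ p.2.1 = p.2.2.1 then (1 / 2 : ℂ) else 0 := by
    ext p q
    simp only [hρ, Matrix.of_apply, Matrix.diagonal_apply, ite_and]
  have hstate : IsState ρ := by
    rw [hdiag]
    constructor
    · rw [Matrix.posSemidef_diagonal_iff]
      intro p
      split_ifs
      · rw [one_div, inv_nonneg]; exact zero_le_two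
      · exact le_rfl
    · simp [Matrix.trace_diagonal, Fintype.sum_prod_type, ← two_mul]
  have hB : SB ρ = 1 := by
    refine vNEntropy_eq_one 0 1 (by decide) ?_
    ext p q
    fin_cases p <;> fin_cases q <;> simp [hρ]
  have hC : SC ρ = 1 := by
    refine vNEntropy_eq_one 0 1 (by decide) ?_
    ext p q
    fin_cases p <;> fin_cases q <;> simp [hρ]
  have hD : SD ρ = 0 := by
    refine vNEntropy_eq_zero 0 ?_
    ext p q
    fin_cases p <;> fin_cases q <;> norm_num [hρ]
  have hAB : SAB ρ = 1 := by
    refine vNEntropy_eq_one (0, 0) (0, 1) (by decide) ?_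
    ext p q
    fin_cases p <;> fin_cases q <;> simp [hρ]
  have hBC : SBC ρ = 1 := by
    refine vNEntropy_eq_one (0, 0) (1, 1) (by decide) ?_
    ext p q
    fin_cases p <;> fin_cases q <;> simp [hρ]
  have hAD : SAD ρ = 0 := by
    refine vNEntropy_eq_zero (0, 0) ?_
    ext p q
    fin_cases p <;> fin_cases q <;> norm_num [hρ]
  have hBD : SBD ρ = 1 := by
    refine vNEntropy_eq_one (0, 0) (1, 0) (by decide) ?_
    ext p q
    fin_cases p <;> fin_cases q <;> simp [hρ]
  have hCD : SCD ρ = 1 := by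
    refine vNEntropy_eq_one (0, 0) (1, 0) (by decide) ?_
    ext p q
    fin_cases p <;> fin_cases q <;> simp [hρ]
  have hABC : SABC ρ = 1 := by
    refine vNEntropy_eq_one (0, 0, 0) (0, 1, 1) (by decide) ?_
    ext p q
    fin_cases p <;> fin_cases q <;> simp [hρ]
  have hABD : SABD ρ = 1 := by
    refine vNEntropy_eq_one (0, 0, 0) (0, 1, 0) (by decide) ?_
    ext p q
    fin_cases p <;> fin_cases q <;> simp [hρ]
  rw [hB, hC, hD, hAB, hBC, hAD, hBD, hCD, hABC, hABD]
  exact ⟨hstate, by norm_num⟩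
end
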